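/- arXiv:1103.2893 — 12 statements merged into one kernel-verified Lean document; each statement's English description precedes it below -/
import Mathlib

section
/- Let K be a field and Ω/K a Galois field extension, with Gal(Ω/K) carrying the Krull topology. Let I be a subset of ℕ, and for every i ∈ I let Γ_i be a profinite group and ρ_i : Gal(Ω/K) → Γ_i a continuous group homomorphism. For each i ∈ I let K_i be the fixed field in Ω of ker(ρ_i). Then the following two conditions are equivalent: (i) the homomorphism Gal(Ω/K) → ∏_{i∈I} ρ_i(Gal(Ω/K)) induced by the ρ_i is surjective; (ii) for every s ≥ 1 and all indices i₁ < i₂ < ⋯ < i_{s+1} in I, the intersection of the compositum K_{i₁}·K_{i₂}⋯K_{i_s} with K_{i_{s+1}} equals K. -/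
open IntermediateField

/-!
By the Galois correspondence, condition (ii) says that for a finite set `S` of indices below `i`
the subgroups `⋂ j ∈ S, ker (ρ j)` and `ker (ρ i)` generate `Gal(Ω/K)`; this uses that the product
of a closed subgroup and a closed normal subgroup is again a closed subgroup. Equivalently,
`⋂ j ∈ S, ker (ρ j)` already maps onto the range of `ρ i`. A prescribed family of values can
therefore be attained on any finite set of indices, one index at a time in increasing order: the
value at a new maximal index is corrected by an element that is trivial at all earlier ones.
Compactness of `Gal(Ω/K)` passes from finite sets of indices to all of them.
-/

section Chains

theorem strictMono_finSnoc {α : Type*} [Preorder α] {n : ℕ} {f : Fin n → α} {x : α}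
    (hf : StrictMono f) (hx : ∀ j, f j < x) :
    StrictMono (Fin.snoc f x : Fin (n + 1) → α) := by
  intro a b hab
  induction a using Fin.lastCases with
  | last => exact absurd hab (Fin.le_last b).not_gt
  | cast a =>
    induction b using Fin.lastCases with
    | last => simpa only [Fin.snoc_castSucc, Fin.snoc_last] using hx a
    | cast b =>
      simpa only [Fin.snoc_castSucc] using hf (Fin.castSucc_lt_castSucc_iff.mp hab)

theorem forall_disjoint_biSup_finset_iff_forall_strictMono {ι α : Type*} [LinearOrder ι]
    [CompleteLattice α] (a : ι → α) :
    (∀ (S : Finset ι) (i : ι), (∀ j ∈ S, j < i) → Disjoint (⨆ j ∈ S, a j) (a i)) ↔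
      ∀ s : ℕ, 1 ≤ s → ∀ f : Fin (s + 1) → ι, StrictMono f →
        (⨆ j : Fin s, a (f j.castSucc)) ⊓ a (f (Fin.last s)) = ⊥ := by
  constructor
  · intro h s _ f hf
    have hlt : ∀ j ∈ Finset.univ.image fun j : Fin s => f j.castSucc, j < f (Fin.last s) := by
      simpa using fun j : Fin s => hf j.castSucc_lt_last
    have hdisj := h _ _ hlt
    rwa [disjoint_iff, Finset.iSup_finset_image, ← Finset.sup_eq_iSup,
      Finset.sup_univ_eq_iSup] at hdisj
  · intro h S i hi
    rcases S.eq_empty_or_nonempty with rfl | hS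
    · simp
    have hsup : ⨆ k, a (S.orderEmbOfFin rfl k) = ⨆ j ∈ S, a j := by
      simp_rw [← Finset.mem_coe, ← S.range_orderEmbOfFin rfl, iSup_range]
    have hmono := strictMono_finSnoc (S.orderEmbOfFin rfl).strictMono fun k =>
      hi _ (S.orderEmbOfFin_mem rfl k)
    simpa only [Fin.snoc_castSucc, Fin.snoc_last, hsup, ← disjoint_iff] using
      h S.card hS.card_pos _ hmono

end Chains

section ProductMap

variable {G ι : Type*} [Group G] {Γ : ι → Type*} [∀ i, Group (Γ i)] {ρ : ∀ i, G →* Γ i}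

theorem codisjoint_biInf_ker_of_surjective_pi_rangeRestrict
    (h : Function.Surjective (MonoidHom.pi fun i => (ρ i).rangeRestrict))
    {S : Set ι} {i : ι} (hi : i ∉ S) : Codisjoint (⨅ j ∈ S, (ρ j).ker) (ρ i).ker := by
  classical
  rw [← Subgroup.map_eq_range_iff]
  refine le_antisymm (Subgroup.map_le_range _ _) ?_
  rintro _ ⟨σ, rfl⟩
  obtain ⟨τ, hτ⟩ := h (Pi.mulSingle i ((ρ i).rangeRestrict σ))
  have hτ_eq_one : ∀ j ∈ S, ρ j τ = 1 := fun j hj =>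
    congrArg Subtype.val ((congrFun hτ j).trans
      (Pi.mulSingle_eq_of_ne (ne_of_mem_of_not_mem hj hi) _))
  have hτ_eq : ρ i τ = ρ i σ :=
    congrArg Subtype.val ((congrFun hτ i).trans (Pi.mulSingle_eq_same i _))
  exact ⟨τ, by simpa [Subgroup.mem_iInf] using hτ_eq_one, hτ_eq⟩

theorem exists_forall_mem_finset_apply_eq [LinearOrder ι]
    (h : ∀ (S : Finset ι) (i : ι), (∀ j ∈ S, j < i) → Codisjoint (⨅ j ∈ S, (ρ j).ker) (ρ i).ker)
    (y : ∀ i, (ρ i).range) (S : Finset ι) : ∃ σ, ∀ i ∈ S, ρ i σ = y i := by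
  induction S using Finset.induction_on_max with
  | empty => exact ⟨1, by simp⟩
  | insert i S hi ih =>
    obtain ⟨σ, hσ⟩ := ih
    obtain ⟨τ, hτ, hτi⟩ : (ρ i σ)⁻¹ * y i ∈ (⨅ j ∈ S, (ρ j).ker).map (ρ i) := by
      rw [Subgroup.map_eq_range_iff.mpr (h S i hi)]
      exact mul_mem (inv_mem ⟨σ, rfl⟩) (y i).2
    have hτS : ∀ j ∈ S, ρ j τ = 1 := by simpa [Subgroup.mem_iInf] using hτ
    refine ⟨σ * τ, Finset.forall_mem_insert _ _ _ |>.mpr ⟨?_, fun j hj => ?_⟩⟩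
    · rw [map_mul, hτi, mul_inv_cancel_left]
    · rw [map_mul, hτS j hj, mul_one, hσ j hj]

theorem isClosed_fiber_of_isClosed_ker [TopologicalSpace G] [ContinuousMul G]
    {H : Type*} [Group H] {φ : G →* H} (hφ : IsClosed (φ.ker : Set G)) (y : φ.range) :
    IsClosed {σ | φ σ = y} := by
  obtain ⟨_, τ, rfl⟩ := y
  have hpre : {σ | φ σ = φ τ} = (τ⁻¹ * ·) ⁻¹' φ.ker := by
    ext σ
    simp [inv_mul_eq_one, eq_comm (a := φ σ)]
  rw [hpre]
  exact hφ.preimage (continuous_const_mul τ⁻¹)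

theorem surjective_pi_rangeRestrict_of_forall_finset [TopologicalSpace G] [ContinuousMul G]
    [CompactSpace G] (hρ : ∀ i, IsClosed ((ρ i).ker : Set G))
    (h : ∀ (y : ∀ i, (ρ i).range) (S : Finset ι), ∃ σ, ∀ i ∈ S, ρ i σ = y i) :
    Function.Surjective (MonoidHom.pi fun i => (ρ i).rangeRestrict) := by
  intro y
  obtain ⟨σ, hσ⟩ : (⋂ i, {σ | ρ i σ = y i}).Nonempty := by
    refine CompactSpace.iInter_nonempty (fun i => isClosed_fiber_of_isClosed_ker (hρ i) (y i))
      fun S => ?_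
    simpa [Set.Nonempty] using h y S
  exact ⟨σ, funext fun i => Subtype.ext (Set.mem_iInter.mp hσ i)⟩

theorem surjective_pi_rangeRestrict_iff_forall_codisjoint [LinearOrder ι] [TopologicalSpace G]
    [ContinuousMul G] [CompactSpace G] (hρ : ∀ i, IsClosed ((ρ i).ker : Set G)) :
    Function.Surjective (MonoidHom.pi fun i => (ρ i).rangeRestrict) ↔
      ∀ (S : Finset ι) (i : ι), (∀ j ∈ S, j < i) →
        Codisjoint (⨅ j ∈ S, (ρ j).ker) (ρ i).ker :=
  ⟨fun h _ i hi => codisjoint_biInf_ker_of_surjective_pi_rangeRestrict h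
      fun hmem => (hi i hmem).false,
    fun h => surjective_pi_rangeRestrict_of_forall_finset hρ (exists_forall_mem_finset_apply_eq h)⟩

end ProductMap

theorem isClosed_sup_of_normal {G : Type*} [Group G] [TopologicalSpace G] [ContinuousMul G]
    [CompactSpace G] [T2Space G] {H N : Subgroup G} [N.Normal] (hH : IsClosed (H : Set G))
    (hN : IsClosed (N : Set G)) : IsClosed ((H ⊔ N : Subgroup G) : Set G) := by
  rw [Subgroup.mul_normal]
  exact (hH.isCompact.mul hN.isCompact).isClosed

section GaloisCorrespondence

variable {K Ω : Type*} [Field K] [Field Ω] [Algebra K Ω]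

theorem fixingSubgroup_iSup {ι : Sort*} (L : ι → IntermediateField K Ω) :
    (⨆ i, L i).fixingSubgroup = ⨅ i, (L i).fixingSubgroup :=
  eq_of_forall_le_iff fun H => by simp_rw [← le_iff_le, le_iInf_iff, ← le_iff_le, iSup_le_iff]

variable [IsGalois K Ω]

theorem fixingSubgroup_fixedField_of_isClosed {H : Subgroup Gal(Ω/K)}
    (hH : IsClosed (H : Set Gal(Ω/K))) : (fixedField H).fixingSubgroup = H :=
  InfiniteGalois.fixingSubgroup_fixedField ⟨H, hH⟩

theorem fixedField_eq_bot_iff_of_isClosed {H : Subgroup Gal(Ω/K)}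
    (hH : IsClosed (H : Set Gal(Ω/K))) : fixedField H = ⊥ ↔ H = ⊤ := by
  constructor
  · intro h
    rw [← fixingSubgroup_fixedField_of_isClosed hH, h, fixingSubgroup_bot]
  · rintro rfl
    exact InfiniteGalois.fixedField_bot

theorem fixedField_fixingSubgroup_sup (L M : IntermediateField K Ω) :
    fixedField (L.fixingSubgroup ⊔ M.fixingSubgroup) = L ⊓ M :=
  InfiniteGalois.GaloisCoinsertionIntermediateFieldSubgroup.u_inf_l L M

theorem disjoint_iff_codisjoint_fixingSubgroup (L M : IntermediateField K Ω)
    [M.fixingSubgroup.Normal] :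
    Disjoint L M ↔ Codisjoint L.fixingSubgroup M.fixingSubgroup := by
  have hclosed := isClosed_sup_of_normal (InfiniteGalois.fixingSubgroup_isClosed L)
    (InfiniteGalois.fixingSubgroup_isClosed M)
  rw [disjoint_iff, codisjoint_iff, ← fixedField_fixingSubgroup_sup,
    fixedField_eq_bot_iff_of_isClosed hclosed]

theorem disjoint_biSup_fixedField_iff_codisjoint_biInf {ι : Type*} {N : ι → Subgroup Gal(Ω/K)}
    [∀ i, (N i).Normal] (hN : ∀ i, IsClosed (N i : Set Gal(Ω/K))) (S : Finset ι) (i : ι) :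
    Disjoint (⨆ j ∈ S, fixedField (N j)) (fixedField (N i)) ↔
      Codisjoint (⨅ j ∈ S, N j) (N i) := by
  have hfix (j : ι) : (fixedField (N j)).fixingSubgroup = N j :=
    fixingSubgroup_fixedField_of_isClosed (hN j)
  have : (fixedField (N i)).fixingSubgroup.Normal := by rw [hfix i]; infer_instance
  simp_rw [disjoint_iff_codisjoint_fixingSubgroup, fixingSubgroup_iSup, hfix]

end GaloisCorrespondence

theorem stmt0_general {K Ω ι : Type*} [Field K] [Field Ω] [Algebra K Ω] [IsGalois K Ω]
    [LinearOrder ι] {Γ : ι → Type*} [∀ i, Group (Γ i)] (ρ : ∀ i, Gal(Ω/K) →* Γ i)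
    (hρ : ∀ i, IsClosed ((ρ i).ker : Set Gal(Ω/K))) :
    Function.Surjective (MonoidHom.pi fun i => (ρ i).rangeRestrict) ↔
      ∀ s : ℕ, 1 ≤ s → ∀ f : Fin (s + 1) → ι, StrictMono f →
        (⨆ j : Fin s, fixedField (ρ (f j.castSucc)).ker) ⊓ fixedField (ρ (f (Fin.last s))).ker =
          ⊥ := by
  rw [surjective_pi_rangeRestrict_iff_forall_codisjoint hρ,
    ← forall_disjoint_biSup_finset_iff_forall_strictMono fun i => fixedField (ρ i).ker]
  simp_rw [disjoint_biSup_fixedField_iff_codisjoint_biInf hρ]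

/-- For a Galois extension `Ω/K` and a family of continuous homomorphisms
`ρ i : Gal(Ω/K) → Γ i` (indexed by a subset `I` of `ℕ`) into profinite groups, with `K i`
the fixed field of `ker (ρ i)`, the following are equivalent:
(i) the induced map `Gal(Ω/K) → ∏_{i ∈ I} ρ i (Gal(Ω/K))` is surjective;
(ii) for every `s ≥ 1` and all indices `i₁ < ⋯ < i_{s+1}` in `I`, the intersection of the
compositum `K i₁ ⋯ K i_s` with `K i_{s+1}` equals `K`. -/
theorem stmt0
    (K Ω : Type*) [Field K] [Field Ω] [Algebra K Ω] [IsGalois K Ω]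
    (I : Set ℕ)
    (Γ : I → Type*) [∀ i, Group (Γ i)] [∀ i, TopologicalSpace (Γ i)]
    [∀ i, IsTopologicalGroup (Γ i)] [∀ i, CompactSpace (Γ i)] [∀ i, T2Space (Γ i)]
    [∀ i, TotallyDisconnectedSpace (Γ i)]
    (ρ : ∀ i : I, (Ω ≃ₐ[K] Ω) →* Γ i) (hρ : ∀ i, Continuous (ρ i))
    (Kfld : ∀ i : I, IntermediateField K Ω)
    (hKfld : ∀ i, Kfld i = IntermediateField.fixedField (ρ i).ker) :
    Function.Surjective
        (fun σ : Ω ≃ₐ[K] Ω => fun i : I => (⟨ρ i σ, ⟨σ, rfl⟩⟩ : (ρ i).range)) ↔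
      ∀ (s : ℕ), 1 ≤ s → ∀ f : Fin (s + 1) → I, StrictMono (fun j => (f j : ℕ)) →
        (⨆ j : Fin s, Kfld (f j.castSucc)) ⊓ Kfld (f (Fin.last s)) = ⊥ := by
  obtain rfl : Kfld = fun i => fixedField (ρ i).ker := funext hKfld
  exact stmt0_general ρ fun i => isClosed_singleton.preimage (hρ i)
end

section
/- Let Γ be a profinite group. For every prime number ℓ let Γ_ℓ be a profinite group and ρ_ℓ : Γ → Γ_ℓ a continuous group homomorphism. Let Γ' ⊆ Γ be an open subgroup. If the family (ρ_ℓ)_ℓ is independent, i.e. the induced homomorphism Γ → ∏_ℓ ρ_ℓ(Γ) (product over all primes ℓ) is surjective, then there exists a finite set I of prime numbers such that the family (ρ_ℓ)_{ℓ∉I} is independent over Γ', i.e. the homomorphism Γ' → ∏_{ℓ∉I} ρ_ℓ(Γ') induced by the ρ_ℓ with ℓ ∉ I is surjective. -/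
/-!
An independent family induces a continuous surjection `F` from the compact group `Γ` onto the
Hausdorff group `∏ i, ρ i (Γ)`; such a map is a quotient map, hence open. So `F (Γ')` is a
neighbourhood of `1` and contains every point of the product whose coordinates in some finite set
`I` are trivial. Any point of `∏ i ∉ I, ρ i (Γ')`, extended by `1` on `I`, therefore comes
from `Γ'`.
-/

open Topology

section Independence

variable {ι Γ : Type*} [Group Γ] {G : ι → Type*} [∀ i, Group (G i)]

/-- Independence of a family of homomorphisms `ρ i : Γ → G i`: the group `Γ` surjects onto the
product of the images `ρ i (Γ)` (not of the groups `G i`). -/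
def IndependentHoms (ρ : ∀ i, Γ →* G i) : Prop :=
  Function.Surjective (MonoidHom.pi fun i ↦ (ρ i).rangeRestrict)

/-- Independence of a family of homomorphisms over a subgroup `H` of the source: `H` surjects onto
the product of its own images `ρ i (H)`. -/
def IndependentHomsOver (ρ : ∀ i, Γ →* G i) (H : Subgroup Γ) : Prop :=
  Function.Surjective (MonoidHom.pi fun i ↦ (ρ i).subgroupMap H)

theorem independentHomsOver_compl_of_forall_mem_map (ρ : ∀ i, Γ →* G i) (H : Subgroup Γ) (I : Set ι)
    (hI : ∀ z : ∀ i, (ρ i).range, (∀ i ∈ I, z i = 1) →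
      z ∈ H.map (MonoidHom.pi fun i ↦ (ρ i).rangeRestrict)) :
    IndependentHomsOver (fun i : {i // i ∉ I} ↦ ρ i) H := by
  classical
  intro y
  let extendByOne : ∀ i, (ρ i).range := fun i ↦
    if hi : i ∈ I then 1 else Subgroup.inclusion (Subgroup.map_le_range (ρ i) H) (y ⟨i, hi⟩)
  obtain ⟨g, hg, hgy⟩ := hI extendByOne fun i hi ↦ dif_pos hi
  refine ⟨⟨g, hg⟩, funext fun ⟨i, hi⟩ ↦ Subtype.ext ?_⟩
  calc ρ i g = extendByOne i := congrArg Subtype.val (congrFun hgy i)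
    _ = y ⟨i, hi⟩ := by simp only [extendByOne, dif_neg hi, Subgroup.coe_inclusion]

end Independence

theorem exists_finset_forall_eq_imp_mem_of_mem_nhds {ι : Type*} {X : ι → Type*}
    [∀ i, TopologicalSpace (X i)] {x : ∀ i, X i} {U : Set (∀ i, X i)} (hU : U ∈ 𝓝 x) :
    ∃ I : Finset ι, ∀ y : ∀ i, X i, (∀ i ∈ I, y i = x i) → y ∈ U := by
  rw [nhds_pi, Filter.mem_pi'] at hU
  obtain ⟨I, t, ht, htU⟩ := hU
  exact ⟨I, fun y hy ↦ htU fun i hi ↦ hy i hi ▸ mem_of_mem_nhds (ht i)⟩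

theorem monoidHom_isOpenMap_of_compactSpace_of_surjective {G H : Type*} [Group G]
    [TopologicalSpace G] [ContinuousMul G] [CompactSpace G]
    [Group H] [TopologicalSpace H] [T2Space H] {f : G →* H} (hcont : Continuous f)
    (hsurj : Function.Surjective f) : IsOpenMap f :=
  (MonoidHom.isOpenQuotientMap_of_isQuotientMap <|
    hcont.isClosedMap.isQuotientMap hcont hsurj).isOpenMap

theorem stmt1_general {ι Γ : Type*} [Group Γ] [TopologicalSpace Γ] [ContinuousMul Γ]
    [CompactSpace Γ] {G : ι → Type*} [∀ i, Group (G i)] [∀ i, TopologicalSpace (G i)]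
    [∀ i, T2Space (G i)] {ρ : ∀ i, Γ →* G i} (hρ : ∀ i, Continuous (ρ i))
    (hindep : IndependentHoms ρ) {Γ' : Subgroup Γ} (hΓ' : IsOpen (Γ' : Set Γ)) :
    ∃ I : Finset ι, IndependentHomsOver (fun i : {i // i ∉ I} ↦ ρ i) Γ' := by
  let F : Γ →* ∀ i, (ρ i).range := MonoidHom.pi fun i ↦ (ρ i).rangeRestrict
  have hF : Continuous F := continuous_pi fun i ↦ (hρ i).subtype_mk _
  have hopen : IsOpen (Γ'.map F : Set (∀ i, (ρ i).range)) :=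
    monoidHom_isOpenMap_of_compactSpace_of_surjective hF hindep _ hΓ'
  obtain ⟨I, hI⟩ :=
    exists_finset_forall_eq_imp_mem_of_mem_nhds (hopen.mem_nhds (Γ'.map F).one_mem)
  exact ⟨I, independentHomsOver_compl_of_forall_mem_map ρ Γ' I hI⟩

/-- If a family of continuous homomorphisms `ρ ℓ` (indexed by the primes)
from a profinite group `Γ` to profinite groups `Γℓ ℓ` is independent, then for every open
subgroup `Γ'` of `Γ` there is a finite set `I` of primes such that the family
`(ρ ℓ)_{ℓ ∉ I}` is independent over `Γ'`. -/
theorem stmt1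
    (Γ : Type*) [Group Γ] [TopologicalSpace Γ] [IsTopologicalGroup Γ]
    [CompactSpace Γ] [T2Space Γ] [TotallyDisconnectedSpace Γ]
    (Γℓ : Nat.Primes → Type*) [∀ ℓ, Group (Γℓ ℓ)] [∀ ℓ, TopologicalSpace (Γℓ ℓ)]
    [∀ ℓ, IsTopologicalGroup (Γℓ ℓ)] [∀ ℓ, CompactSpace (Γℓ ℓ)] [∀ ℓ, T2Space (Γℓ ℓ)]
    [∀ ℓ, TotallyDisconnectedSpace (Γℓ ℓ)]
    (ρ : ∀ ℓ : Nat.Primes, Γ →* Γℓ ℓ) (hρ : ∀ ℓ, Continuous (ρ ℓ))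
    (Γ' : Subgroup Γ) (hΓ' : IsOpen (Γ' : Set Γ))
    (hindep : Function.Surjective
      (fun g : Γ => fun ℓ : Nat.Primes => (⟨ρ ℓ g, ⟨g, rfl⟩⟩ : (ρ ℓ).range))) :
    ∃ I : Finset Nat.Primes, Function.Surjective
      (fun g : Γ' => fun ℓ : {ℓ : Nat.Primes // ℓ ∉ I} =>
        (⟨ρ ℓ.1 g.1, ⟨g.1, g.2, rfl⟩⟩ : Subgroup.map (ρ ℓ.1) Γ')) :=
  stmt1_general hρ hindep hΓ'
end

section
/- Let K be a finitely generated extension of ℚ. Let E/K be a (possibly infinite) Galois field extension such that Gal(E/K) has finite exponent. Let x₁,…,x_m ∈ K be a transcendence base of K over ℚ, and let R be the integral closure in E of the subring ℤ[x₁,…,x_m] of E generated by x₁,…,x_m over ℤ. Then for every maximal ideal 𝔪 of R, the residue field R/𝔪 is finite. -/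
/-!
Write `A = ℤ[x₁, …, x_m]`, `L = Frac A`, `S` for the integral closure of `A` in `K` and `R` for that
in `E`.

* `ℤ` is a Jacobson ring with finite residue fields, so by the Nullstellensatz every ring of finite
  type over it, in particular `A`, has finite residue fields.
* `A` is normal, so the minimal polynomial over `A` of an element of `S` has degree at most
  `[K : L] < ∞`. Hence the elements of a residue field of `S` are roots of finitely many polynomials
  over a finite residue field of `A`.
* `S` is normal, so it is the ring of invariants of the profinite group `Gal(E/K)` acting on `R`,
  and the decomposition group of `𝔪` surjects onto the automorphisms of `R/𝔪` over the residue field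
  `𝔽_q` of `S`. Thus the Frobenius of `R/𝔪` has finite order `n`: every `t ∈ R/𝔪` satisfies
  `t ^ q ^ n = t`.
-/

open Polynomial

theorem isIntegrallyClosed_mvPolynomial (σ R : Type*) [CommRing R] [IsDomain R]
    [IsIntegrallyClosed R] : IsIntegrallyClosed (MvPolynomial σ R) := by
  let := MvPolynomial.algebraMvPolynomial (σ := σ) (R := R) (S := FractionRing R)
  suffices IsIntegrallyClosedIn (MvPolynomial σ R) (MvPolynomial σ (FractionRing R)) from
    .of_isIntegrallyClosed_of_isIntegrallyClosedIn _ (MvPolynomial σ (FractionRing R))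
  refine isIntegrallyClosedIn_iff.mpr
    ⟨MvPolynomial.map_injective _ (IsFractionRing.injective _ _), fun {p} hp ↦ ?_⟩
  refine MvPolynomial.mem_range_map_iff_coeffs_subset.mpr fun a ha ↦ ?_
  obtain ⟨n, -, rfl⟩ := MvPolynomial.mem_coeffs_iff.mp ha
  exact IsIntegrallyClosed.isIntegral_iff.mp (MvPolynomial.isIntegral_iff_isIntegral_coeff.mp hp n)

theorem isIntegrallyClosed_adjoin_range {k K ι : Type*} [CommRing k] [IsIntegrallyClosed k]
    [CommRing K] [IsDomain K] [Algebra k K] {x : ι → K} (hx : AlgebraicIndependent k x) :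
    IsIntegrallyClosed (Algebra.adjoin k (Set.range x)) := by
  have : IsDomain k := hx.algebraMap_injective.isDomain
  have := isIntegrallyClosed_mvPolynomial ι k
  exact .of_equiv hx.aevalEquiv.toRingEquiv

theorem isIntegralClosure_tower_bot (R A B C : Type*) [CommRing R] [CommRing A] [CommRing B]
    [CommRing C] [Algebra R A] [Algebra R B] [Algebra A B] [Algebra C B] [IsScalarTower R A B]
    [IsIntegralClosure C A B] [Algebra.IsIntegral R A] : IsIntegralClosure C R B where
  algebraMap_injective := IsIntegralClosure.algebraMap_injective C A B
  isIntegral_iff {b} := by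
    rw [← IsIntegralClosure.isIntegral_iff (A := C) (R := A)]
    exact ⟨.tower_top, isIntegral_trans b⟩

theorem finiteDimensional_of_essFiniteType_of_isAlgebraic (k A L K : Type*) [CommRing k]
    [CommRing A] [Field L] [Field K] [Algebra A L] [FaithfulSMul A L] [Algebra L K] [Algebra A K]
    [IsScalarTower A L K] [Algebra k L] [Algebra k K] [IsScalarTower k L K]
    [Algebra.EssFiniteType k K] [Algebra.IsAlgebraic A K] : FiniteDimensional L K := by
  have : Algebra.IsAlgebraic L K := .extendScalars (FaithfulSMul.algebraMap_injective A L)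
  have : Algebra.EssFiniteType L K := .of_comp k L K
  exact Algebra.finite_of_essFiniteType_of_isAlgebraic

section

variable (R F : Type*) {K : Type*} [CommRing R] [Field F] [Algebra R F] [IsFractionRing R F]
  [Field K] [Algebra F K] [Algebra R K] [IsScalarTower R F K]

theorem essFiniteType_of_fg_top (hK : (⊤ : IntermediateField F K).FG) :
    Algebra.EssFiniteType R K := by
  have : Algebra.EssFiniteType R F := .of_isLocalization F (nonZeroDivisors R)
  have : Algebra.EssFiniteType F K := IntermediateField.fg_top_iff.mp hK
  exact .comp R F K

theorem isTranscendenceBasis_of_isAlgebraic_intermediateField_adjoin {ι : Type*} {x : ι → K}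
    (hx_ind : AlgebraicIndependent F x)
    (hx_alg : Algebra.IsAlgebraic (IntermediateField.adjoin F (Set.range x)) K) :
    IsTranscendenceBasis R x := by
  have : IsDomain R := (IsFractionRing.injective R F).isDomain
  have : Algebra.IsAlgebraic R F :=
    (IsFractionRing.comap_isAlgebraic_iff (K := F)).mpr inferInstance
  have hx : IsTranscendenceBasis F x := hx_ind.isTranscendenceBasis_iff_isAlgebraic.mpr
    (IntermediateField.isAlgebraic_adjoin_iff_top.mp hx_alg)
  exact (Algebra.IsAlgebraic.isTranscendenceBasis_iff R F).mpr hx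

end

theorem finite_of_forall_exists_monic_natDegree_le {F κ : Type*} [CommRing F] [Finite F]
    [CommRing κ] [IsDomain κ] [Algebra F κ] (d : ℕ)
    (h : ∀ a : κ, ∃ p : F[X], p.Monic ∧ p.natDegree ≤ d ∧ aeval a p = 0) : Finite κ := by
  have : Finite (degreeLT F (d + 1)) := .of_equiv _ (degreeLTEquiv F (d + 1)).symm.toEquiv
  refine Set.finite_univ_iff.mp <|
    (Set.finite_iUnion fun p : degreeLT F (d + 1) ↦ rootSet_finite p.1 κ).subset fun a _ ↦ ?_
  obtain ⟨p, hp_monic, hp_deg, hpa⟩ := h a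
  have hp_lt : p ∈ degreeLT F (d + 1) :=
    mem_degreeLT.mpr (degree_le_natDegree.trans_lt (by exact_mod_cast Nat.lt_succ_of_le hp_deg))
  exact Set.mem_iUnion.mpr ⟨⟨p, hp_lt⟩, mem_rootSet'.mpr ⟨(hp_monic.map _).ne_zero, hpa⟩⟩

theorem finite_of_exponentExists_algEquiv (F κ : Type*) [Field F] [Finite F] [Field κ]
    [Algebra F κ] [Algebra.IsAlgebraic F κ] (h : Monoid.ExponentExists Gal(κ/F)) : Finite κ := by
  have := Fintype.ofFinite F
  obtain ⟨n, hn_pos, hn⟩ := h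
  have hq : 1 < Fintype.card F ^ n := Nat.one_lt_pow hn_pos.ne' Fintype.one_lt_card
  refine finite_of_forall_exists_monic_natDegree_le (F := F) (Fintype.card F ^ n) fun a ↦
    ⟨X ^ (Fintype.card F ^ n) - X, monic_X_pow_sub (by rw [degree_X]; exact_mod_cast hq),
      (FiniteField.X_pow_card_sub_X_natDegree_eq F hq).le, ?_⟩
  have h_frob : a ^ Fintype.card F ^ n = a := calc
    a ^ Fintype.card F ^ n = (FiniteField.frobeniusAlgEquivOfAlgebraic F κ ^ n) a := by
      rw [AlgEquiv.coe_pow, FiniteField.coe_frobeniusAlgEquivOfAlgebraic_iterate]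
    _ = a := by rw [hn, AlgEquiv.one_apply]
  simp [h_frob]

/-- All residue fields of the ring `R` at its maximal ideals are finite. This is the property
carried from the base ring up to the integral closure in `E`. -/
def HasFiniteResidueFields (R : Type*) [CommRing R] : Prop :=
  ∀ 𝔪 : Ideal R, 𝔪.IsMaximal → Finite (R ⧸ 𝔪)

namespace HasFiniteResidueFields

theorem of_ringEquiv {R S : Type*} [CommRing R] [CommRing S] (e : R ≃+* S)
    (hR : HasFiniteResidueFields R) : HasFiniteResidueFields S := fun 𝔪 _ ↦
  have := hR (𝔪.comap (e : R →+* S))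
    (Ideal.comap_isMaximal_of_surjective (e : R →+* S) e.surjective)
  .of_surjective (Ideal.quotientMap 𝔪 (e : R →+* S) le_rfl)
    (Ideal.quotientMap_surjective e.surjective)

theorem of_finiteType {R S : Type*} [CommRing R] [IsJacobsonRing R] [CommRing S] [Algebra R S]
    [Algebra.FiniteType R S] (hR : HasFiniteResidueFields R) : HasFiniteResidueFields S := by
  intro 𝔪 h𝔪
  let := Ideal.Quotient.field 𝔪
  have : Algebra.FiniteType R (S ⧸ 𝔪) :=
    .of_surjective (Ideal.Quotient.mkₐ R 𝔪) (Ideal.Quotient.mkₐ_surjective R 𝔪)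
  have : Module.Finite R (S ⧸ 𝔪) := finite_of_finite_type_of_isJacobsonRing R (S ⧸ 𝔪)
  have h_max : (𝔪.under R).IsMaximal := by
    have := Ideal.isMaximal_comap_of_isIntegral_of_isMaximal (R := R) (⊥ : Ideal (S ⧸ 𝔪))
    rwa [IsScalarTower.algebraMap_eq R S (S ⧸ 𝔪), ← Ideal.comap_comap, ← RingHom.ker_eq_comap_bot,
      Ideal.Quotient.algebraMap_eq, Ideal.mk_ker] at this
  have := hR _ h_max
  have : Module.Finite (R ⧸ 𝔪.under R) (S ⧸ 𝔪) := .of_restrictScalars_finite R _ _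
  exact Module.finite_of_finite (R ⧸ 𝔪.under R)

theorem of_forall_exists_monic_natDegree_le {A S : Type*} [CommRing A] [CommRing S] [Algebra A S]
    (hA : HasFiniteResidueFields A) (d : ℕ)
    (h : ∀ s : S, ∃ p : A[X], p.Monic ∧ p.natDegree ≤ d ∧ aeval s p = 0) :
    HasFiniteResidueFields S := by
  intro 𝔪 h𝔪
  have : Algebra.IsIntegral A S := ⟨fun s ↦ (h s).imp fun _ hp ↦ ⟨hp.1, hp.2.2⟩⟩
  have := hA (𝔪.under A) (Ideal.isMaximal_comap_of_isIntegral_of_isMaximal 𝔪)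
  refine finite_of_forall_exists_monic_natDegree_le (F := A ⧸ 𝔪.under A) d fun a ↦ ?_
  obtain ⟨s, rfl⟩ := Ideal.Quotient.mk_surjective a
  obtain ⟨p, hp_monic, hp_deg, hps⟩ := h s
  refine ⟨p.map (algebraMap A _), hp_monic.map _, natDegree_map_le.trans hp_deg, ?_⟩
  rw [aeval_map_algebraMap]
  exact (aeval_algebraMap_apply (S ⧸ 𝔪) s p).trans (by rw [hps, map_zero])

theorem of_isIntegral_of_finiteDimensional (A L S K : Type*) [CommRing A] [IsIntegrallyClosed A]
    [Field L] [Algebra A L] [IsFractionRing A L] [CommRing S] [Algebra A S]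
    [Algebra.IsIntegral A S] [Field K] [Algebra L K] [FiniteDimensional L K] [Algebra A K]
    [IsScalarTower A L K] [Algebra S K] [IsScalarTower A S K] [FaithfulSMul S K]
    (hA : HasFiniteResidueFields A) : HasFiniteResidueFields S := by
  have : IsDomain A := (IsFractionRing.injective A L).isDomain
  have : IsDomain S := (FaithfulSMul.algebraMap_injective S K).isDomain
  refine hA.of_forall_exists_monic_natDegree_le (Module.finrank L K) fun s ↦ ?_
  have hs : IsIntegral A s := Algebra.IsIntegral.isIntegral s
  refine ⟨minpoly A s, minpoly.monic hs, ?_, minpoly.aeval A s⟩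
  calc (minpoly A s).natDegree = (minpoly L (algebraMap S K s)).natDegree := by
        rw [minpoly.isIntegrallyClosed_eq_field_fractions L K hs, (minpoly.monic hs).natDegree_map]
    _ ≤ Module.finrank L K := minpoly.natDegree_le _

theorem of_isInvariant_of_exponentExists (A B G : Type*) [CommRing A] [CommRing B] [Algebra A B]
    [Group G] [TopologicalSpace G] [IsTopologicalGroup G] [CompactSpace G]
    [TotallyDisconnectedSpace G] [MulSemiringAction G B] [SMulCommClass G A B]
    [TopologicalSpace B] [DiscreteTopology B] [ContinuousSMul G B] [Algebra.IsInvariant A B G]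
    (hG : Monoid.ExponentExists G) (hA : HasFiniteResidueFields A) :
    HasFiniteResidueFields B := by
  intro Q hQ
  have : Algebra.IsIntegral A B := Algebra.IsInvariant.isIntegral_of_profinite (G := G)
  have hP : (Q.under A).IsMaximal := Ideal.isMaximal_comap_of_isIntegral_of_isMaximal Q
  have := hA (Q.under A) hP
  let := Ideal.Quotient.field (Q.under A)
  let := Ideal.Quotient.field Q
  refine finite_of_exponentExists_algEquiv (A ⧸ Q.under A) (B ⧸ Q) ?_
  obtain ⟨n, hn_pos, hn⟩ := hG
  refine ⟨n, hn_pos, fun σ ↦ ?_⟩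
  obtain ⟨g, rfl⟩ :=
    Ideal.Quotient.stabilizerHom_surjective_of_profinite (G := G) (Q.under A) Q σ
  have hg : g ^ n = 1 := Subtype.ext (hn g)
  rw [← map_pow, hg, map_one]

end HasFiniteResidueFields

section

variable (S K E : Type*) [CommRing S] [Field K] [Field E] [Algebra S K] [Algebra K E]
  [Algebra S E] [IsScalarTower S K E]

theorem isInvariant_integralClosure_of_isGalois [IsIntegrallyClosedIn S K] [IsGalois K E] :
    Algebra.IsInvariant S (integralClosure S E) Gal(E/K) := by
  refine ⟨fun b hb ↦ ?_⟩
  obtain ⟨a, ha⟩ := (InfiniteGalois.mem_range_algebraMap_iff_fixed (k := K) (b : E)).mpr fun σ ↦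
    congrArg Subtype.val (hb σ)
  have ha_int : IsIntegral S a :=
    (isIntegral_algebraMap_iff (algebraMap K E).injective).mp (ha ▸ b.2)
  obtain ⟨s, rfl⟩ := IsIntegrallyClosedIn.isIntegral_iff.mp ha_int
  exact ⟨s, Subtype.ext ((IsScalarTower.algebraMap_apply S K E s).trans ha)⟩

theorem continuousSMul_integralClosure [Algebra.IsAlgebraic K E]
    [TopologicalSpace (integralClosure S E)] [DiscreteTopology (integralClosure S E)] :
    ContinuousSMul Gal(E/K) (integralClosure S E) := by
  rw [continuousSMul_iff_stabilizer_isOpen]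
  intro b
  convert stabilizer_isOpen_of_isIntegral (K := K) (b : E)
  ext σ
  simp [MulAction.mem_stabilizer_iff, Subtype.ext_iff]

theorem HasFiniteResidueFields.integralClosure_of_isGalois [IsIntegrallyClosedIn S K] [IsGalois K E]
    (hexp : Monoid.ExponentExists Gal(E/K)) (hS : HasFiniteResidueFields S) :
    HasFiniteResidueFields (integralClosure S E) := by
  let : TopologicalSpace (integralClosure S E) := ⊥
  have : DiscreteTopology (integralClosure S E) := ⟨rfl⟩
  have := continuousSMul_integralClosure S K E
  have := isInvariant_integralClosure_of_isGalois S K E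
  exact .of_isInvariant_of_exponentExists S _ Gal(E/K) hexp hS

end

theorem HasFiniteResidueFields.integralClosure_of_finiteDimensional_of_isGalois
    (A L K E : Type*) [CommRing A] [IsIntegrallyClosed A] [Field L] [Algebra A L]
    [IsFractionRing A L] [Field K] [Algebra L K] [FiniteDimensional L K] [Algebra A K]
    [IsScalarTower A L K] [Field E] [Algebra K E] [IsGalois K E] [Algebra A E]
    [IsScalarTower A K E] (hexp : Monoid.ExponentExists Gal(E/K))
    (hA : HasFiniteResidueFields A) : HasFiniteResidueFields (integralClosure A E) := by
  let S := integralClosure A K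
  have hS : HasFiniteResidueFields S := .of_isIntegral_of_finiteDimensional A L S K hA
  have hR : HasFiniteResidueFields (integralClosure S E) :=
    hS.integralClosure_of_isGalois S K E hexp
  have : IsIntegralClosure (integralClosure S E) A E := isIntegralClosure_tower_bot A S E _
  exact hR.of_ringEquiv
    (IsIntegralClosure.equiv A (integralClosure S E) E (integralClosure A E)).toRingEquiv

theorem HasFiniteResidueFields.integralClosure_map {k K E : Type*} [CommRing k] [CommRing K]
    [CommRing E] [Algebra k K] [Algebra K E] [Algebra k E] [IsScalarTower k K E]
    (B : Subalgebra k K) (hB : HasFiniteResidueFields (integralClosure B E)) :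
    HasFiniteResidueFields (integralClosure (B.map (IsScalarTower.toAlgHom k K E)) E) := by
  set C := B.map (IsScalarTower.toAlgHom k K E)
  let φ : B →ₐ[k] C := (IsScalarTower.toAlgHom k K E).subalgebraMap B
  let := φ.toAlgebra
  have : IsScalarTower B C E := .of_algebraMap_eq fun _ ↦ rfl
  have : Algebra.IsIntegral B C :=
    ⟨φ.toRingHom.isIntegral_of_surjective (AlgHom.subalgebraMap_surjective _ _)⟩
  have : IsIntegralClosure (integralClosure C E) B E := isIntegralClosure_tower_bot B C E _
  exact hB.of_ringEquiv
    (IsIntegralClosure.equiv B (integralClosure B E) E (integralClosure C E)).toRingEquiv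

theorem stmt2_general {k K E ι : Type*} [CommRing k] [IsJacobsonRing k] [IsIntegrallyClosed k]
    (hk : HasFiniteResidueFields k) [Field K] [Algebra k K] [Algebra.EssFiniteType k K]
    [Field E] [Algebra K E] [Algebra k E] [IsScalarTower k K E] [IsGalois K E]
    (hexp : Monoid.ExponentExists Gal(E/K)) [Finite ι] {x : ι → K}
    (hx : IsTranscendenceBasis k x) :
    HasFiniteResidueFields
      (integralClosure (Algebra.adjoin k (Set.range fun i ↦ algebraMap K E (x i))) E) := by
  have : Nontrivial k := hx.1.algebraMap_injective.isDomain.toNontrivial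
  let A := Algebra.adjoin k (Set.range x)
  have : IsIntegrallyClosed A := isIntegrallyClosed_adjoin_range hx.1
  have : Algebra.FiniteType k A := .adjoin_of_finite (Set.finite_range x)
  have hA : HasFiniteResidueFields A := hk.of_finiteType
  have : Algebra.IsAlgebraic A K := hx.isAlgebraic
  let := FractionRing.liftAlgebra A K
  have : FiniteDimensional (FractionRing A) K :=
    finiteDimensional_of_essFiniteType_of_isAlgebraic k A _ K
  have hAE : HasFiniteResidueFields (integralClosure A E) :=
    hA.integralClosure_of_finiteDimensional_of_isGalois A (FractionRing A) K E hexp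
  have h_map : A.map (IsScalarTower.toAlgHom k K E) =
      Algebra.adjoin k (Set.range fun i ↦ algebraMap K E (x i)) := by
    rw [AlgHom.map_adjoin, ← Set.range_comp]; rfl
  exact h_map ▸ hAE.integralClosure_map

theorem isJacobsonRing_int : IsJacobsonRing ℤ := by
  rw [isJacobsonRing_iff_prime_eq]
  intro P hP
  rcases eq_or_ne P ⊥ with rfl | hP_ne
  · refine le_antisymm (fun a ha ↦ ?_) Ideal.le_jacobson
    have h_unit : IsUnit (a * a + 1) := Ideal.mem_jacobson_bot.mp ha a
    rcases Int.isUnit_iff.mp h_unit with h | h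
    · simpa using h
    · nlinarith
  · have := hP.isMaximal hP_ne
    exact Ideal.jacobson_eq_self_of_isMaximal

theorem hasFiniteResidueFields_int : HasFiniteResidueFields ℤ := fun _ h𝔪 ↦
  Ring.HasFiniteQuotients.finiteQuotient
    (Ring.ne_bot_of_isMaximal_of_not_isField h𝔪 Int.not_isField)

/-- Let `K` be a finitely generated extension of `ℚ` and `E/K` a Galois
extension whose Galois group has finite exponent. Let `x₁, …, x_m` be a transcendence base
of `K/ℚ` and `R` the integral closure in `E` of the subring `ℤ[x₁, …, x_m]` of `E`.
Then the residue field `R/𝔪` is finite for every maximal ideal `𝔪` of `R`. -/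
theorem stmt2
    (K : Type*) [Field K] [Algebra ℚ K]
    (hKfg : ∃ s : Finset K, IntermediateField.adjoin ℚ (s : Set K) = ⊤)
    (E : Type*) [Field E] [Algebra K E] [Algebra ℚ E] [IsScalarTower ℚ K E]
    [IsGalois K E]
    (hexp : ∃ n : ℕ, 1 ≤ n ∧ ∀ σ : E ≃ₐ[K] E, σ ^ n = 1)
    (m : ℕ) (x : Fin m → K)
    (hx_ind : AlgebraicIndependent ℚ x)
    (hx_alg : Algebra.IsAlgebraic (IntermediateField.adjoin ℚ (Set.range x)) K)
    (A : Subalgebra ℤ E) (hA : A = Algebra.adjoin ℤ (Set.range fun i => algebraMap K E (x i)))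
    (𝔪 : Ideal (integralClosure A E)) (h𝔪 : 𝔪.IsMaximal) :
    Finite ((integralClosure A E) ⧸ 𝔪) := by
  subst hA
  have := isJacobsonRing_int
  have : Algebra.EssFiniteType ℤ K := essFiniteType_of_fg_top ℤ ℚ hKfg
  exact stmt2_general hasFiniteResidueFields_int hexp
    (isTranscendenceBasis_of_isAlgebraic_intermediateField_adjoin ℤ ℚ hx_ind hx_alg) 𝔪 h𝔪
end

section
/- Let K be a finitely generated extension of ℚ. Let E/K be a (possibly infinite) Galois field extension such that Gal(E/K) has finite exponent. Let x₁,…,x_m ∈ K be a transcendence base of K over ℚ, and let R be the integral closure in E of the subring ℤ[x₁,…,x_m] of E generated by x₁,…,x_m over ℤ. Then for every nonzero element f ∈ R there exist two maximal ideals 𝔪₁ and 𝔪₂ of R such that f ∉ 𝔪₁, f ∉ 𝔪₂, and the characteristic of the residue field R/𝔪₁ is different from the characteristic of the residue field R/𝔪₂. -/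
/-!
A nonzero `f` integral over `A = ℤ[x₁, …, x_m]` divides a nonzero `c ∈ A`. Algebraic independence
makes `A` a polynomial ring, so some evaluation `φ : A → ℤ` has `φ c ≠ 0`. If `p` is a prime not
dividing `φ c`, the kernel of `A → ℤ → 𝔽_p` is maximal and does not contain `c`; by going up it is
the contraction of a maximal ideal of the integral closure, which has residue characteristic `p`
and cannot contain `f`.
-/

open Filter

/-- The residue characteristics of the closed points of the basic open set `D(f) ⊆ Spec R`. -/
def residueCharsAway {R : Type*} [CommRing R] (f : R) : Set ℕ :=
  {p | ∃ M : Ideal R, M.IsMaximal ∧ f ∉ M ∧ ringChar (R ⧸ M) = p}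

section IntegralExtension

variable {A R : Type*} [CommRing A] [CommRing R] [Algebra A R] [Algebra.IsIntegral A R]
  [FaithfulSMul A R] {c : A} {f : R}

theorem mem_residueCharsAway_of_ringHom_zmod {p : ℕ} [Fact p.Prime] (ψ : A →+* ZMod p)
    (hψc : ψ c ≠ 0) (hfc : f ∣ algebraMap A R c) : p ∈ residueCharsAway f := by
  have : (RingHom.ker ψ).IsMaximal :=
    RingHom.ker_isMaximal_of_surjective ψ (ZMod.ringHom_surjective ψ)
  obtain ⟨M, hM, hMker⟩ :=
    Ideal.exists_maximal_ideal_liesOver_of_isIntegral (S := R) (RingHom.ker ψ)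
  have mem_iff (a : A) : algebraMap A R a ∈ M ↔ ψ a = 0 :=
    (Ideal.mem_of_liesOver M (RingHom.ker ψ) a).symm
  have hpM : (p : R) ∈ M := by
    simpa using (mem_iff p).2 (by simp)
  refine ⟨M, hM, fun hfM ↦ hψc ((mem_iff c).1 (M.mem_of_dvd hfc hfM)), ?_⟩
  exact CharP.ringChar_of_prime_eq_zero Fact.out
    (by simpa using Ideal.Quotient.eq_zero_iff_mem.2 hpM)

theorem eventually_prime_mem_residueCharsAway_of_ringHom_int (φ : A →+* ℤ) (hφc : φ c ≠ 0)
    (hfc : f ∣ algebraMap A R c) : ∀ᶠ p : ℕ in atTop, p.Prime → p ∈ residueCharsAway f := by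
  filter_upwards [eventually_gt_atTop (φ c).natAbs] with p hlt hp
  have : Fact p.Prime := ⟨hp⟩
  refine mem_residueCharsAway_of_ringHom_zmod ((Int.castRingHom (ZMod p)).comp φ) ?_ hfc
  rw [RingHom.comp_apply, eq_intCast, Ne, ZMod.intCast_zmod_eq_zero_iff_dvd]
  exact fun hdvd ↦ hφc (Int.eq_zero_of_abs_lt_dvd hdvd (by rwa [Int.abs_eq_natAbs, Nat.cast_lt]))

end IntegralExtension

theorem exists_algHom_adjoin_apply_ne_zero {ι k B : Type*} [CommRing k] [IsDomain k] [Infinite k]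
    [CommRing B] [Algebra k B] {y : ι → B} (hy : AlgebraicIndependent k y)
    {c : Algebra.adjoin k (Set.range y)} (hc : c ≠ 0) :
    ∃ φ : Algebra.adjoin k (Set.range y) →ₐ[k] k, φ c ≠ 0 := by
  have hpoly : hy.aevalEquiv.symm c ≠ 0 := by simpa using hc
  obtain ⟨a, ha⟩ : ∃ a : ι → k, MvPolynomial.eval a (hy.aevalEquiv.symm c) ≠ 0 := by
    by_contra! h
    exact hpoly (MvPolynomial.funext (by simpa using h))
  exact ⟨(MvPolynomial.aeval a).comp hy.aevalEquiv.symm.toAlgHom,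
    by simpa [MvPolynomial.aeval_eq_eval] using ha⟩

theorem algebraicIndependent_int_algebraMap {ι K B : Type*} [Field K] [Algebra ℚ K] [CommRing B]
    [Nontrivial B] [Algebra K B] {x : ι → K} (hx : AlgebraicIndependent ℚ x) :
    AlgebraicIndependent ℤ fun i ↦ algebraMap K B (x i) :=
  (hx.restrictScalars (algebraMap ℤ ℚ).injective_int).map' (f := (algebraMap K B).toIntAlgHom)
    (algebraMap K B).injective

theorem infinite_of_eventually_prime_mem {s : Set ℕ} (hs : ∀ᶠ p in atTop, p.Prime → p ∈ s) :
    s.Infinite :=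
  Nat.frequently_atTop_iff_infinite.1
    ((Nat.frequently_atTop_iff_infinite.2 Nat.infinite_setOfPred_prime).mp hs)

theorem faithfulSMul_integralClosure (A B : Type*) [CommRing A] [CommRing B] [Algebra A B]
    [FaithfulSMul A B] : FaithfulSMul A (integralClosure A B) :=
  FaithfulSMul.tower_bot A (integralClosure A B) B

theorem stmt3_general {ι B : Type*} [CommRing B] {y : ι → B} (hy : AlgebraicIndependent ℤ y)
    {f : integralClosure (Algebra.adjoin ℤ (Set.range y)) B} (hf : f ∈ nonZeroDivisors _) :
    ∀ᶠ p : ℕ in atTop, p.Prime → p ∈ residueCharsAway f := by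
  have : IsDomain (Algebra.adjoin ℤ (Set.range y)) := hy.aevalEquiv.symm.toMulEquiv.isDomain _
  have := faithfulSMul_integralClosure (Algebra.adjoin ℤ (Set.range y)) B
  obtain ⟨c, hc, hfc⟩ := (Algebra.IsIntegral.isIntegral
    (R := Algebra.adjoin ℤ (Set.range y)) f).isAlgebraic.exists_nonzero_dvd hf
  obtain ⟨φ, hφc⟩ := exists_algHom_adjoin_apply_ne_zero hy hc
  exact eventually_prime_mem_residueCharsAway_of_ringHom_int φ.toRingHom hφc hfc

/-- Let `K` be a finitely generated extension of `ℚ` and `E/K` a Galois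
extension whose Galois group has finite exponent. Let `x₁, …, x_m` be a transcendence base
of `K/ℚ` and `R` the integral closure in `E` of the subring `ℤ[x₁, …, x_m]` of `E`.
Then for every nonzero `f ∈ R` there are maximal ideals `𝔪₁, 𝔪₂` of `R` avoiding `f`
whose residue fields have different characteristics. -/
theorem stmt3
    (K : Type*) [Field K] [Algebra ℚ K]
    (hKfg : ∃ s : Finset K, IntermediateField.adjoin ℚ (s : Set K) = ⊤)
    (E : Type*) [Field E] [Algebra K E] [Algebra ℚ E] [IsScalarTower ℚ K E]
    [IsGalois K E]
    (hexp : ∃ n : ℕ, 1 ≤ n ∧ ∀ σ : E ≃ₐ[K] E, σ ^ n = 1)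
    (m : ℕ) (x : Fin m → K)
    (hx_ind : AlgebraicIndependent ℚ x)
    (hx_alg : Algebra.IsAlgebraic (IntermediateField.adjoin ℚ (Set.range x)) K)
    (A : Subalgebra ℤ E) (hA : A = Algebra.adjoin ℤ (Set.range fun i => algebraMap K E (x i)))
    (f : integralClosure A E) (hf : f ≠ 0) :
    ∃ 𝔪₁ 𝔪₂ : Ideal (integralClosure A E), 𝔪₁.IsMaximal ∧ 𝔪₂.IsMaximal ∧
      f ∉ 𝔪₁ ∧ f ∉ 𝔪₂ ∧
      ringChar ((integralClosure A E) ⧸ 𝔪₁) ≠ ringChar ((integralClosure A E) ⧸ 𝔪₂) := by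
  subst hA
  obtain ⟨_, ⟨𝔪₁, hmax₁, hf₁, rfl⟩, _, ⟨𝔪₂, hmax₂, hf₂, rfl⟩, hne⟩ :=
    (infinite_of_eventually_prime_mem <| stmt3_general (algebraicIndependent_int_algebraMap hx_ind)
      (mem_nonZeroDivisors_of_ne_zero hf)).nontrivial
  exact ⟨𝔪₁, 𝔪₂, hmax₁, hmax₂, hf₁, hf₂, hne⟩
end

section
/- Let K be a finitely generated extension of ℚ and let E/K be an algebraic Galois field extension. Let κ_E be the constant field of E and κ_K the constant field of K. Then the extension κ_E/κ_K is Galois and the extension κ_E·K/K (compositum taken inside E) is Galois. -/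
open IntermediateField

/-!
If `k` is algebraically closed in `K` and `x` is algebraic over `k`, then the coefficients of the
minimal polynomial of `x` over `K` are algebraic over `k`, being polynomials in the conjugates of
`x`; hence they lie in `k`, and `x` has the same minimal polynomial over `k` as over `K`.
Separability and splitting therefore descend from `E / K` to the algebraic closure of `k` in `E`.
With `k = κ_K` this is the first assertion. For the second, a `K`-endomorphism of `E` preserves
algebraicity over the base field, so it maps `κ_E`, and hence `κ_E · K`, into itself.
-/

section IsIntegrallyClosedIn

variable (k : Type*) {K E : Type*} [Field k] [Field K] [Field E] [Algebra k K] [Algebra k E]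
  [Algebra K E] [IsScalarTower k K E] [IsIntegrallyClosedIn k K]

theorem minpoly_mem_lifts_of_isIntegrallyClosedIn {x : E} (hx : IsIntegral k x) :
    minpoly K x ∈ Polynomial.lifts (algebraMap k K) := by
  have coeff_integral := integralClosure.mem_lifts_of_monic_of_dvd_map K (minpoly.monic hx)
    (minpoly.monic hx.tower_top) (minpoly.dvd_map_of_isScalarTower k K x)
  rw [Polynomial.lifts_iff_coeff_lifts] at coeff_integral ⊢
  intro n
  obtain ⟨c, hc⟩ := coeff_integral n
  rw [← hc]
  exact IsIntegrallyClosedIn.isIntegral_iff.1 c.2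

theorem map_minpoly_of_isIntegrallyClosedIn {x : E} (hx : IsIntegral k x) :
    (minpoly k x).map (algebraMap k K) = minpoly K x :=
  minpoly.map_algebraMap hx (minpoly_mem_lifts_of_isIntegrallyClosedIn k hx)

variable (K E)

theorem isSeparable_algebraicClosure_of_isIntegrallyClosedIn [Algebra.IsSeparable K E] :
    Algebra.IsSeparable k (algebraicClosure k E) where
  isSeparable' x := by
    have separable_over_K : (minpoly K (x : E)).Separable := Algebra.IsSeparable.isSeparable K _
    rwa [← map_minpoly_of_isIntegrallyClosedIn k (mem_algebraicClosure_iff'.1 x.2),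
      Polynomial.separable_map, ← minpoly_eq] at separable_over_K

theorem normal_algebraicClosure_of_isIntegrallyClosedIn [Normal K E] :
    Normal k (algebraicClosure k E) where
  splits' x := by
    have splits_over_K := Normal.splits (F := K) inferInstance (x : E)
    rw [← map_minpoly_of_isIntegrallyClosedIn k (mem_algebraicClosure_iff'.1 x.2),
      Polynomial.map_map, ← IsScalarTower.algebraMap_eq, ← minpoly_eq] at splits_over_K
    exact Splits.algebraicClosure E splits_over_K

theorem isGalois_algebraicClosure_of_isIntegrallyClosedIn [IsGalois K E] :
    IsGalois k (algebraicClosure k E) :=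
  isGalois_iff.2 ⟨isSeparable_algebraicClosure_of_isIntegrallyClosedIn k K E,
    normal_algebraicClosure_of_isIntegrallyClosedIn k K E⟩

end IsIntegrallyClosedIn

section Tower

variable (F K E : Type*) [Field F] [Field K] [Field E] [Algebra F K] [Algebra F E] [Algebra K E]
  [IsScalarTower F K E]

theorem isGalois_extendScalars_algebraicClosure [IsGalois K E] :
    IsGalois ((algebraicClosure F K).map (IsScalarTower.toAlgHom F K E))
      (extendScalars (algebraicClosure.map_le_of_algHom (IsScalarTower.toAlgHom F K E))) := by
  have : IsIntegrallyClosedIn (algebraicClosure F K) K :=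
    inferInstanceAs (IsIntegrallyClosedIn (integralClosure F K) K)
  have := isGalois_algebraicClosure_of_isIntegrallyClosedIn (algebraicClosure F K) K E
  have closure_eq :=
    (algebraicClosure.eq_restrictScalars_of_isAlgebraic F (algebraicClosure F K) E).symm
  exact IsGalois.of_equiv_equiv (F := algebraicClosure F K)
    (E := algebraicClosure (algebraicClosure F K) E)
    (f := (equivMap (algebraicClosure F K) (IsScalarTower.toAlgHom F K E)).toRingEquiv)
    (g := (equivOfEq closure_eq).toRingEquiv) rfl

theorem normal_adjoin_algebraicClosure [Normal K E] :
    Normal K (adjoin K (algebraicClosure F E : Set E)) := by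
  rw [normal_iff_forall_map_le]
  intro σ
  rw [adjoin_map, adjoin_le_iff]
  rintro _ ⟨y, hy, rfl⟩
  exact subset_adjoin _ _ ((map_mem_algebraicClosure_iff (σ.restrictScalars F)).2 hy)

theorem stmt4_general [IsGalois K E] :
    IsGalois ((algebraicClosure F K).map (IsScalarTower.toAlgHom F K E))
        (extendScalars (algebraicClosure.map_le_of_algHom (IsScalarTower.toAlgHom F K E))) ∧
      IsGalois K (adjoin K (algebraicClosure F E : Set E)) :=
  ⟨isGalois_extendScalars_algebraicClosure F K E,
    isGalois_iff.2 ⟨inferInstance, normal_adjoin_algebraicClosure F K E⟩⟩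

end Tower

/-- Let `K` be a finitely generated extension of `ℚ` and `E/K` an algebraic
Galois extension. Let `κ_E` be the constant field of `E` (the algebraic closure of `ℚ` in
`E`) and `κ_K` the constant field of `K` (realized inside `E` as the image of the algebraic
closure of `ℚ` in `K`). Then `κ_E/κ_K` is Galois and `κ_E·K/K` is Galois. -/
theorem stmt4
    (K E : Type*) [Field K] [Field E] [Algebra ℚ K] [Algebra ℚ E] [Algebra K E]
    [IsScalarTower ℚ K E] [Algebra.IsAlgebraic K E] [IsGalois K E]
    (hKfg : ∃ s : Finset K, IntermediateField.adjoin ℚ (s : Set K) = ⊤) :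
    IsGalois ((algebraicClosure ℚ K).map (IsScalarTower.toAlgHom ℚ K E))
        (IntermediateField.extendScalars
          (algebraicClosure.map_le_of_algHom (IsScalarTower.toAlgHom ℚ K E))) ∧
      IsGalois K (IntermediateField.adjoin K ((algebraicClosure ℚ E : IntermediateField ℚ E) : Set E)) :=
  stmt4_general ℚ K E
end

section
/- Let K be a finitely generated extension of ℚ and let E/K be an algebraic Galois field extension. Let κ_E be the constant field of E and κ_K the constant field of K, and let κ_E·K be the compositum inside E. Then every automorphism of κ_E·K over K maps κ_E into itself, and the restriction homomorphism Aut(κ_E·K/K) → Aut(κ_E/κ_K), σ ↦ σ|_{κ_E}, is bijective. -/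
open IntermediateField
noncomputable section
set_option synthInstance.maxHeartbeats 400000
variable {K E : Type*} [Field K] [Field E] [Algebra ℚ K] [Algebra ℚ E] [Algebra K E]
  [IsScalarTower ℚ K E]
def constCompositum (K E : Type*) [Field K] [Field E] [Algebra ℚ E] [Algebra K E] : IntermediateField K E :=
  adjoin K ((algebraicClosure ℚ E : IntermediateField ℚ E) : Set E)
def constKE (K E : Type*) [Field K] [Field E] [Algebra ℚ K] [Algebra ℚ E] [Algebra K E]
  [IsScalarTower ℚ K E] : IntermediateField ℚ E :=
  (algebraicClosure ℚ K).map (IsScalarTower.toAlgHom ℚ K E)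
def constExt (K E : Type*) [Field K] [Field E] [Algebra ℚ K] [Algebra ℚ E] [Algebra K E]
  [IsScalarTower ℚ K E] : IntermediateField (constKE K E) E :=
  extendScalars (algebraicClosure.map_le_of_algHom (IsScalarTower.toAlgHom ℚ K E))
lemma mem_constCompositum {x : E} (hx : x ∈ algebraicClosure ℚ E) :
    x ∈ constCompositum K E := subset_adjoin K _ hx
lemma restrict_mem (σ : constCompositum K E ≃ₐ[K] constCompositum K E) {x : E}
    (hx : x ∈ algebraicClosure ℚ E) :
    ((σ ⟨x, mem_constCompositum hx⟩ : constCompositum K E) : E) ∈ algebraicClosure ℚ E := by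
  let ι : constCompositum K E →ₐ[ℚ] E := (constCompositum K E).val.restrictScalars ℚ
  let σ' : constCompositum K E →ₐ[ℚ] constCompositum K E :=
    (σ : constCompositum K E →ₐ[K] constCompositum K E).restrictScalars ℚ
  have h1 : (⟨x, mem_constCompositum hx⟩ : constCompositum K E)
      ∈ algebraicClosure ℚ (constCompositum K E) :=
    (map_mem_algebraicClosure_iff ι).mp hx
  have h2 : σ (⟨x, mem_constCompositum hx⟩ : constCompositum K E)
      ∈ algebraicClosure ℚ (constCompositum K E) :=
    (map_mem_algebraicClosure_iff σ').mpr h1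
  exact (map_mem_algebraicClosure_iff ι).mpr h2
lemma sigma_fix (σ : constCompositum K E ≃ₐ[K] constCompositum K E)
    (z : constCompositum K E) (y : K) (hz : (z : E) = algebraMap K E y) : σ z = z := by
  have hzy : z = algebraMap K (constCompositum K E) y := Subtype.ext hz
  rw [hzy, AlgEquiv.commutes]
def restrictAut (σ : constCompositum K E ≃ₐ[K] constCompositum K E) :
    constExt K E ≃ₐ[constKE K E] constExt K E where
  toFun x := ⟨(σ ⟨x.1, mem_constCompositum x.2⟩ : constCompositum K E),
    restrict_mem σ x.2⟩
  invFun x := ⟨(σ.symm ⟨x.1, mem_constCompositum x.2⟩ : constCompositum K E),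
    restrict_mem σ.symm x.2⟩
  left_inv x := by
    refine Subtype.ext ?_
    show ((σ.symm (⟨_, _⟩ : constCompositum K E) : constCompositum K E) : E) = (x : E)
    exact congrArg Subtype.val (σ.symm_apply_apply ⟨x.1, mem_constCompositum x.2⟩)
  right_inv x := by
    refine Subtype.ext ?_
    show ((σ (⟨_, _⟩ : constCompositum K E) : constCompositum K E) : E) = (x : E)
    exact congrArg Subtype.val (σ.apply_symm_apply ⟨x.1, mem_constCompositum x.2⟩)
  map_mul' x y := by
    refine Subtype.ext ?_
    show ((σ (⟨_, _⟩ : constCompositum K E) : constCompositum K E) : E)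
      = ((σ (⟨_, _⟩ : constCompositum K E) : constCompositum K E) : E)
        * ((σ (⟨_, _⟩ : constCompositum K E) : constCompositum K E) : E)
    exact congrArg Subtype.val
      (map_mul σ ⟨x.1, mem_constCompositum x.2⟩ ⟨y.1, mem_constCompositum y.2⟩)
  map_add' x y := by
    refine Subtype.ext ?_
    show ((σ (⟨_, _⟩ : constCompositum K E) : constCompositum K E) : E)
      = ((σ (⟨_, _⟩ : constCompositum K E) : constCompositum K E) : E)
        + ((σ (⟨_, _⟩ : constCompositum K E) : constCompositum K E) : E)
    exact congrArg Subtype.val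
      (map_add σ ⟨x.1, mem_constCompositum x.2⟩ ⟨y.1, mem_constCompositum y.2⟩)
  commutes' c := by
    obtain ⟨y, hy, hyx⟩ := c.2
    refine Subtype.ext ?_
    show ((σ (⟨_, _⟩ : constCompositum K E) : constCompositum K E) : E) = _
    exact congrArg Subtype.val (sigma_fix σ _ y hyx.symm)

/-!
Write `k` for `κ_K`. If `x` is in `κ_E`, the minimal polynomial of `x` over `K` has coefficients
algebraic over `ℚ`, hence in `k`. So `k(x)` and `K` are linearly disjoint over `k`, and by the
primitive element theorem so are `κ_E` and `K`. Therefore `κ_E·K` is `K ⊗[k] κ_E`, to which every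
`k`-automorphism of `κ_E` extends `K`-linearly; the extension is unique because `κ_E` generates
`κ_E·K` over `K`.
-/

section LinearDisjointness

lemma minpoly_eq_map_of_isIntegrallyClosedIn {k L R : Type*} [Field k] [Field L] [Ring R]
    [Algebra k L] [Algebra k R] [Algebra L R] [IsScalarTower k L R] [IsIntegrallyClosedIn k L]
    {x : R} (hx : IsIntegral k x) : minpoly L x = (minpoly k x).map (algebraMap k L) := by
  have minpoly_dvd : minpoly L x ∣ (minpoly k x).map (algebraMap k L) :=
    minpoly.dvd_map_of_isScalarTower k L x
  have coeff_integral : ∀ n, IsIntegral k ((minpoly L x).coeff n) :=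
    Polynomial.isIntegral_coeff_of_dvd _ _ (minpoly.monic hx) (minpoly.monic hx.tower_top)
      minpoly_dvd
  obtain ⟨q, hq⟩ : ∃ q : Polynomial k, q.map (algebraMap k L) = minpoly L x := by
    rw [← Polynomial.mem_lifts, Polynomial.lifts_iff_coeff_lifts]
    exact fun n ↦ IsIntegrallyClosedIn.algebraMap_eq_of_integral (coeff_integral n)
  have dvd_lift : minpoly k x ∣ q := by
    apply minpoly.dvd
    rw [← Polynomial.aeval_map_algebraMap L, hq, minpoly.aeval]
  exact Polynomial.eq_of_monic_of_associated (minpoly.monic hx.tower_top)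
    ((minpoly.monic hx).map _)
    (associated_of_dvd_dvd minpoly_dvd (hq ▸ Polynomial.map_dvd (algebraMap k L) dvd_lift))

variable {k L M : Type*} [Field k] [Field L] [Field M] [Algebra k L] [Algebra k M] [Algebra L M]
  [IsScalarTower k L M]

lemma linearDisjoint_adjoin_simple_of_isIntegral [IsIntegrallyClosedIn k L] {x : M}
    (hx : IsIntegral k x) : k⟮x⟯.LinearDisjoint L := by
  refine .of_basis_left (adjoin.powerBasis hx).basis ?_
  have degree_eq : (minpoly L x).natDegree = (adjoin.powerBasis hx).dim := by
    rw [minpoly_eq_map_of_isIntegrallyClosedIn hx, Polynomial.natDegree_map,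
      adjoin.powerBasis_dim]
  have powers_independent := linearIndependent_pow (K := L) x
  rw [degree_eq] at powers_independent
  convert powers_independent using 1
  ext i
  simp

lemma linearDisjoint_of_isSeparable [IsIntegrallyClosedIn k L] (A : IntermediateField k M)
    [Algebra.IsSeparable k A] : A.LinearDisjoint L := by
  have : Algebra.IsIntegral k A.toSubalgebra := inferInstanceAs (Algebra.IsIntegral k A)
  refine Subalgebra.LinearDisjoint.of_linearDisjoint_finite_left _ _ fun B hBA _ ↦ ?_
  have B_isField : IsField B := isField_of_isIntegral_of_isField' (Field.toIsField k)
  let F : IntermediateField k M := B.toIntermediateField' B_isField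
  have : Algebra.IsSeparable k F := .of_algHom k A (inclusion (E := F) (F := A) hBA)
  have : FiniteDimensional k F := ‹Module.Finite k B›
  obtain ⟨x, adjoin_x⟩ := Field.exists_primitive_element k F
  have F_eq_adjoin : F = k⟮(x : M)⟯ := by rw [← lift_adjoin_simple, adjoin_x, lift_top]
  have x_integral : IsIntegral k (x : M) := (Algebra.IsIntegral.isIntegral x).map F.val
  exact (F_eq_adjoin ▸ linearDisjoint_adjoin_simple_of_isIntegral x_integral : F.LinearDisjoint L)

end LinearDisjointness

section Extension

open scoped TensorProduct

variable {k L M : Type*} [Field k] [Field L] [Field M] [Algebra k L] [Algebra k M] [Algebra L M]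
  [IsScalarTower k L M] {A : IntermediateField k M}

/-- The multiplication map `L ⊗ A → M`. When `A` is algebraic over `k` and linearly disjoint from
`L`, it identifies `L ⊗ A` with the compositum of `L` and `A` inside `M`. -/
def mulAlgHom (L : Type*) [Field L] [Algebra k L] [Algebra L M] [IsScalarTower k L M]
    (A : IntermediateField k M) : L ⊗[k] A →ₐ[L] M :=
  Algebra.TensorProduct.productLeftAlgHom (Algebra.ofId L M) A.val

lemma mulAlgHom_tmul (l : L) (a : A) : mulAlgHom L A (l ⊗ₜ a) = algebraMap L M l * a := rfl

lemma mulAlgHom_injective (h : A.LinearDisjoint L) : Function.Injective (mulAlgHom L A) := by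
  let b := Module.Basis.ofVectorSpace k A
  have image_independent : LinearIndependent L (mulAlgHom L A ∘ b.baseChange L) := by
    convert h.linearIndependent_left b.linearIndependent using 1
    ext i
    simp [mulAlgHom_tmul]
  have eq_constr : (mulAlgHom L A).toLinearMap =
      (b.baseChange L).constr ℕ (mulAlgHom L A ∘ b.baseChange L) :=
    ((b.baseChange L).constr_self ℕ _).symm
  have constr_injective :=
    (b.baseChange L).injective_constr_of_linearIndependent (R₂ := ℕ) image_independent
  rwa [← eq_constr] at constr_injective

lemma mulAlgHom_range [Algebra.IsAlgebraic k A] :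
    (mulAlgHom L A).range = (adjoin L (A : Set M)).toSubalgebra := by
  rw [adjoin_toSubalgebra_of_isAlgebraic fun x hx ↦
    ((isAlgebraic_iff.mp (Algebra.IsAlgebraic.isAlgebraic (R := k) (⟨x, hx⟩ : A))).tower_top L)]
  apply le_antisymm
  · rintro _ ⟨t, rfl⟩
    induction t using TensorProduct.induction_on with
    | zero => exact zero_mem _
    | tmul l a =>
      exact mul_mem (Subalgebra.algebraMap_mem _ l) (Algebra.subset_adjoin a.2)
    | add s t hs ht => exact (map_add (mulAlgHom L A) s t).symm ▸ add_mem hs ht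
  · exact Algebra.adjoin_le fun x hx ↦ ⟨1 ⊗ₜ ⟨x, hx⟩, by simp [mulAlgHom_tmul]⟩

lemma exists_algEquiv_adjoin_extending [Algebra.IsAlgebraic k A] (h : A.LinearDisjoint L)
    (τ : A ≃ₐ[k] A) :
    ∃ σ : adjoin L (A : Set M) ≃ₐ[L] adjoin L (A : Set M),
      ∀ a : A, (σ ⟨a, subset_adjoin L _ a.2⟩ : M) = τ a := by
  let e : L ⊗[k] A ≃ₐ[L] adjoin L (A : Set M) :=
    (AlgEquiv.ofInjective _ (mulAlgHom_injective h)).trans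
      (Subalgebra.equivOfEq _ _ mulAlgHom_range)
  have e_one_tmul (a : A) : e (1 ⊗ₜ a) = ⟨a, subset_adjoin L _ a.2⟩ :=
    Subtype.ext ((mulAlgHom_tmul 1 a).trans (by simp))
  refine ⟨e.symm.trans ((Algebra.TensorProduct.congr .refl τ).trans e), fun a ↦ ?_⟩
  rw [← e_one_tmul, AlgEquiv.trans_apply, AlgEquiv.symm_apply_apply, AlgEquiv.trans_apply,
    Algebra.TensorProduct.congr_apply, Algebra.TensorProduct.map_tmul]
  exact congrArg Subtype.val (e_one_tmul (τ a))

end Extension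

section AlgebraOfMap

variable {F L M : Type*} [Field F] [Field L] [Field M] [Algebra F L] [Algebra F M] [Algebra L M]
  [IsScalarTower F L M]

/-- The action on `L` of the image in `M` of a subfield `S` of `L`. It makes `L` an intermediate
field of `M` over the image of `S`, as needed for linear disjointness over a base inside `M`. -/
instance algebraOfMap (S : IntermediateField F L) :
    Algebra (S.map (IsScalarTower.toAlgHom F L M)) L :=
  (S.val.comp (S.equivMap (IsScalarTower.toAlgHom F L M)).symm.toAlgHom).toRingHom.toAlgebra

instance isScalarTower_map (S : IntermediateField F L) :
    IsScalarTower (S.map (IsScalarTower.toAlgHom F L M)) L M :=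
  .of_algebraMap_eq fun x ↦
    congrArg Subtype.val ((S.equivMap (IsScalarTower.toAlgHom F L M)).apply_symm_apply x).symm

instance isIntegrallyClosedIn_map_algebraicClosure :
    IsIntegrallyClosedIn ((algebraicClosure F L).map (IsScalarTower.toAlgHom F L M)) L := by
  refine isIntegrallyClosedIn_iff.mpr ⟨FaithfulSMul.algebraMap_injective _ _, fun {x} hx ↦ ?_⟩
  have : Algebra.IsIntegral F ((algebraicClosure F L).map (IsScalarTower.toAlgHom F L M)) :=
    ((algebraicClosure F L).equivMap (IsScalarTower.toAlgHom F L M)).isIntegral_iff.mp inferInstance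
  have hxM : IsIntegral F (algebraMap L M x) := isIntegral_trans _ hx.algebraMap
  have hxL : x ∈ algebraicClosure F L :=
    (map_mem_algebraicClosure_iff (IsScalarTower.toAlgHom F L M)).mp hxM
  exact ⟨⟨algebraMap L M x, x, hxL, rfl⟩, (algebraMap L M).injective
    (IsScalarTower.algebraMap_apply _ L M _).symm⟩

end AlgebraOfMap

section ConstantFields

/-- The inclusion `κ_K ⊆ K`, where `κ_K` is realised inside `E` as `constKE K E`. -/
instance constKE.algebra : Algebra (constKE K E) K := algebraOfMap (algebraicClosure ℚ K)

instance constKE.isScalarTower : IsScalarTower (constKE K E) K E :=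
  isScalarTower_map (algebraicClosure ℚ K)

instance constKE.isIntegrallyClosedIn : IsIntegrallyClosedIn (constKE K E) K :=
  isIntegrallyClosedIn_map_algebraicClosure

instance constExt.isAlgebraic : Algebra.IsAlgebraic (constKE K E) (constExt K E) :=
  ⟨fun x ↦ isAlgebraic_iff.mpr ((mem_algebraicClosure_iff.mp x.2).tower_top _)⟩

lemma restrictAut_injective : Function.Injective (restrictAut (K := K) (E := E)) := by
  intro σ τ h
  have algHom_eq : (σ : constCompositum K E →ₐ[K] constCompositum K E) = τ :=
    algHom_ext_of_eq_adjoin K rfl fun x hx ↦ Subtype.ext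
      (congrArg (fun f ↦ (f (⟨x, hx⟩ : constExt K E) : E)) h)
  exact AlgEquiv.coe_toAlgHom_injective algHom_eq

lemma restrictAut_surjective : Function.Surjective (restrictAut (K := K) (E := E)) := by
  intro τ
  obtain ⟨σ, hσ⟩ := exists_algEquiv_adjoin_extending
    (linearDisjoint_of_isSeparable (L := K) (constExt K E)) τ
  exact ⟨σ, AlgEquiv.ext fun a ↦ Subtype.ext (hσ a)⟩

end ConstantFields

theorem stmt5_general
    (K E : Type*) [Field K] [Field E] [Algebra ℚ K] [Algebra ℚ E] [Algebra K E]
    [IsScalarTower ℚ K E] :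
    (∀ (σ : constCompositum K E ≃ₐ[K] constCompositum K E) (x : constCompositum K E),
      (x : E) ∈ algebraicClosure ℚ E →
        ((σ x : constCompositum K E) : E) ∈ algebraicClosure ℚ E) ∧
    Function.Bijective
      (fun σ : constCompositum K E ≃ₐ[K] constCompositum K E => restrictAut σ) :=
  ⟨fun σ _ hx ↦ restrict_mem σ hx, restrictAut_injective, restrictAut_surjective⟩

/-- Let `K` be a finitely generated extension of `ℚ` and `E/K` an algebraic
Galois extension. Let `κ_E` be the constant field of `E` and `κ_K` the constant field of
`K` (realized inside `E`). Then every automorphism of `κ_E·K` over `K` maps `κ_E` into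
itself, and the restriction homomorphism `Aut(κ_E·K/K) → Aut(κ_E/κ_K)`, `σ ↦ σ|_{κ_E}`,
is bijective. -/
theorem stmt5
    (K E : Type*) [Field K] [Field E] [Algebra ℚ K] [Algebra ℚ E] [Algebra K E]
    [IsScalarTower ℚ K E] [Algebra.IsAlgebraic K E] [IsGalois K E]
    (hKfg : ∃ s : Finset K, IntermediateField.adjoin ℚ (s : Set K) = ⊤) :
    (∀ (σ : constCompositum K E ≃ₐ[K] constCompositum K E) (x : constCompositum K E),
      (x : E) ∈ algebraicClosure ℚ E →
        ((σ x : constCompositum K E) : E) ∈ algebraicClosure ℚ E) ∧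
    Function.Bijective
      (fun σ : constCompositum K E ≃ₐ[K] constCompositum K E => restrictAut σ) := by
  exact stmt5_general K E

end
end

section
/- Let K be a finitely generated extension of ℚ and let E/K be an algebraic Galois field extension. Fix an algebraic closure Ẽ of E and let Q̃ be the algebraic closure of ℚ inside Ẽ; let κ_E be the constant field of E, and form the composita Q̃·E, Q̃·K and κ_E·K inside Ẽ. Then Q̃·E is Galois over Q̃·K, E is Galois over κ_E·K, every automorphism of Q̃·E over Q̃·K maps E into itself, and the restriction homomorphism Gal(Q̃·E/Q̃·K) → Gal(E/κ_E·K), σ ↦ σ|_E, is bijective. -/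
open IntermediateField

noncomputable section
set_option synthInstance.maxHeartbeats 400000

variable (K E Et : Type*) [Field K] [Field E] [Field Et]
  [Algebra ℚ K] [Algebra ℚ E] [Algebra ℚ Et]
  [Algebra K E] [Algebra E Et] [Algebra K Et]
  [IsScalarTower ℚ K E] [IsScalarTower ℚ E Et] [IsScalarTower K E Et]
  [IsScalarTower ℚ K Et]

/-- The image of `E` inside the algebraic closure `Ẽ`. -/
def Eimg : IntermediateField ℚ Et := (IsScalarTower.toAlgHom ℚ E Et).fieldRange

/-- The image of `K` inside the algebraic closure `Ẽ`. -/
def Kimg : IntermediateField ℚ Et := (IsScalarTower.toAlgHom ℚ K Et).fieldRange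

/-- The compositum `Q̃·E` inside `Ẽ`, where `Q̃ = algebraicClosure ℚ Ẽ`. -/
def QE : IntermediateField ℚ Et := algebraicClosure ℚ Et ⊔ Eimg E Et

/-- The compositum `Q̃·K` inside `Ẽ`. -/
def QK : IntermediateField ℚ Et := algebraicClosure ℚ Et ⊔ Kimg K Et

/-- The compositum `κ_E·K` inside `Ẽ`, where `κ_E` is the constant field of `E`. -/
def kEK : IntermediateField ℚ Et :=
  (algebraicClosure ℚ E).map (IsScalarTower.toAlgHom ℚ E Et) ⊔ Kimg K Et

lemma Kimg_le_Eimg : Kimg K Et ≤ Eimg E Et := by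
  rintro x hx
  obtain ⟨y, rfl⟩ := hx
  exact ⟨algebraMap K E y, by
    simp [Eimg, IsScalarTower.toAlgHom_apply, ← IsScalarTower.algebraMap_apply]⟩

lemma QK_le_QE : QK K Et ≤ QE E Et :=
  sup_le_sup_left (Kimg_le_Eimg K E Et) _

lemma kEK_le_Eimg : kEK K E Et ≤ Eimg E Et := by
  refine sup_le ?_ (Kimg_le_Eimg K E Et)
  rintro x hx
  obtain ⟨y, hy, rfl⟩ := hx
  exact ⟨y, rfl⟩

lemma kEK_le_QK : kEK K E Et ≤ QK K Et :=
  sup_le ((algebraicClosure.map_le_of_algHom (IsScalarTower.toAlgHom ℚ E Et)).trans le_sup_left)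
    le_sup_right

lemma Eimg_le_QE : Eimg E Et ≤ QE E Et := le_sup_right

/-- `Q̃·E` viewed as an extension of `Q̃·K`. -/
def QEext : IntermediateField (QK K Et) Et := extendScalars (QK_le_QE K E Et)

/-- `E` (inside `Ẽ`) viewed as an extension of `κ_E·K`. -/
def Eext : IntermediateField (kEK K E Et) Et := extendScalars (kEK_le_Eimg K E Et)

variable {K E Et}


lemma restrict6_mem_aux [Algebra.IsAlgebraic K E] [IsGalois K E]
    (σ : QEext K E Et ≃ₐ[QK K Et] QEext K E Et) (y : E) (m : QEext K E Et)
    (hm : (m : Et) = algebraMap E Et y) :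
    ((σ m : QEext K E Et) : Et) ∈ Eimg E Et := by
  have hyI : IsIntegral K y := (Algebra.IsAlgebraic.isAlgebraic (R := K) y).isIntegral
  set p := minpoly K y with hpdef
  have hp0 : p ≠ 0 := minpoly.ne_zero hyI
  have hKQK : ∀ k : K, algebraMap K Et k ∈ QK K Et := by
    intro k
    exact (le_sup_right : Kimg K Et ≤ QK K Et) ⟨k, rfl⟩
  let φ0 : K →+* ↥(QK K Et) := (algebraMap K Et).codRestrict _ hKQK
  let φ : K →+* ↥(QEext K E Et) :=
    (algebraMap ↥(QK K Et) ↥(QEext K E Et)).comp φ0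
  let ι : ↥(QEext K E Et) →+* Et := (QEext K E Et).val.toRingHom
  have hιφ : ι.comp φ = algebraMap K Et := RingHom.ext fun k => rfl
  have hbase : Polynomial.eval₂ (algebraMap K Et) (algebraMap E Et y) p = 0 := by
    have h := Polynomial.hom_eval₂ p (algebraMap K E) (algebraMap E Et) y
    rw [← IsScalarTower.algebraMap_eq] at h
    have : Polynomial.eval₂ (algebraMap K E) y p = 0 := minpoly.aeval K y
    rw [this, map_zero] at h
    exact h.symm
  have h1 : Polynomial.eval₂ φ m p = 0 := by
    apply Subtype.ext
    have h := Polynomial.hom_eval₂ p φ ι m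
    rw [hιφ] at h
    show ι (Polynomial.eval₂ φ m p) = (0 : Et)
    rw [h]
    show Polynomial.eval₂ (algebraMap K Et) (m : Et) p = 0
    rw [hm]
    exact hbase
  have h2 : Polynomial.eval₂ φ (σ m) p = 0 := by
    have h := Polynomial.hom_eval₂ p φ (σ.toAlgHom.toRingHom) m
    have hcomp : (σ.toAlgHom.toRingHom).comp φ = φ := by
      refine RingHom.ext fun k => ?_
      show σ (φ k) = φ k
      exact σ.commutes (φ0 k)
    rw [hcomp, h1, map_zero] at h
    exact h.symm
  have hroot : (p.map (algebraMap K Et)).IsRoot ((σ m : QEext K E Et) : Et) := by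
    rw [Polynomial.IsRoot, Polynomial.eval_map]
    have h := Polynomial.hom_eval₂ p φ ι (σ m)
    rw [hιφ, h2, map_zero] at h
    exact h.symm
  have hsp : Polynomial.Splits (p.map (algebraMap K E)) := Normal.splits inferInstance y
  set q := p.map (algebraMap K E) with hqdef
  have hq : Polynomial.Splits q := hsp
  have hmaps : p.map (algebraMap K Et) = q.map (algebraMap E Et) := by
    rw [hqdef, Polynomial.map_map, ← IsScalarTower.algebraMap_eq]
  have hq0 : q.map (algebraMap E Et) ≠ 0 := by
    rw [← hmaps]
    exact Polynomial.map_ne_zero hp0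
  have hzroots : ((σ m : QEext K E Et) : Et) ∈ (q.map (algebraMap E Et)).roots := by
    rw [Polynomial.mem_roots hq0, ← hmaps]
    exact hroot
  rw [hq.roots_map, Multiset.mem_map] at hzroots
  obtain ⟨w, _, hwz⟩ := hzroots
  exact ⟨w, hwz⟩

/-- Every automorphism of `Q̃·E` over `Q̃·K` maps `E` into itself. -/
lemma restrict6_mem [Algebra.IsAlgebraic K E] [IsGalois K E]
    (σ : QEext K E Et ≃ₐ[QK K Et] QEext K E Et) {x : Et}
    (hx : x ∈ Eimg E Et) :
    ((σ ⟨x, Eimg_le_QE E Et hx⟩ : QEext K E Et) : Et) ∈ Eimg E Et := by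
  obtain ⟨y, hy⟩ := id hx
  exact restrict6_mem_aux σ y ⟨x, Eimg_le_QE E Et hx⟩ hy.symm

/-- The restriction of an automorphism of `Q̃·E` over `Q̃·K` to an automorphism of `E`
over `κ_E·K`. -/
def restrictAut6 [Algebra.IsAlgebraic K E] [IsGalois K E] (σ : QEext K E Et ≃ₐ[QK K Et] QEext K E Et) :
    Eext K E Et ≃ₐ[kEK K E Et] Eext K E Et where
  toFun x := ⟨(σ ⟨x.1, Eimg_le_QE E Et x.2⟩ : QEext K E Et), restrict6_mem σ x.2⟩
  invFun x := ⟨(σ.symm ⟨x.1, Eimg_le_QE E Et x.2⟩ : QEext K E Et),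
    restrict6_mem σ.symm x.2⟩
  left_inv x := by
    refine Subtype.ext ?_
    show ((σ.symm (⟨_, _⟩ : QEext K E Et) : QEext K E Et) : Et) = (x : Et)
    exact congrArg Subtype.val (σ.symm_apply_apply ⟨x.1, Eimg_le_QE E Et x.2⟩)
  right_inv x := by
    refine Subtype.ext ?_
    show ((σ (⟨_, _⟩ : QEext K E Et) : QEext K E Et) : Et) = (x : Et)
    exact congrArg Subtype.val (σ.apply_symm_apply ⟨x.1, Eimg_le_QE E Et x.2⟩)
  map_mul' x y := by
    refine Subtype.ext ?_
    show ((σ (⟨_, _⟩ : QEext K E Et) : QEext K E Et) : Et)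
      = ((σ (⟨_, _⟩ : QEext K E Et) : QEext K E Et) : Et)
        * ((σ (⟨_, _⟩ : QEext K E Et) : QEext K E Et) : Et)
    exact congrArg Subtype.val
      (map_mul σ ⟨x.1, Eimg_le_QE E Et x.2⟩ ⟨y.1, Eimg_le_QE E Et y.2⟩)
  map_add' x y := by
    refine Subtype.ext ?_
    show ((σ (⟨_, _⟩ : QEext K E Et) : QEext K E Et) : Et)
      = ((σ (⟨_, _⟩ : QEext K E Et) : QEext K E Et) : Et)
        + ((σ (⟨_, _⟩ : QEext K E Et) : QEext K E Et) : Et)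
    exact congrArg Subtype.val
      (map_add σ ⟨x.1, Eimg_le_QE E Et x.2⟩ ⟨y.1, Eimg_le_QE E Et y.2⟩)
  commutes' c := by
    refine Subtype.ext ?_
    show ((σ (⟨_, _⟩ : QEext K E Et) : QEext K E Et) : Et) = _
    exact congrArg Subtype.val (σ.commutes ⟨c.1, kEK_le_QK K E Et c.2⟩)

/-!
Since `κ = κ_E` is algebraically closed in `E`, the minimal polynomial over `κ` of an algebraic
element `a` stays minimal over `E`: the coefficients of the minimal polynomial over `E` are
algebraic over `κ`. By the primitive element theorem every separable algebraic extension of `κ`,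
in particular `Q̃`, is then linearly disjoint from `E` over `κ`. So `Q̃·E` is `Q̃ ⊗ E` (over `κ`),
and `τ ∈ Gal(E/κ·K)` extends to `id ⊗ τ`, which fixes both `Q̃` and `K`; this is surjectivity of
the restriction. It is injective because `Q̃·E` is generated by `E` over `Q̃·K`. Both extensions
are Galois because each is of the form `L·E/L` for some `L` containing `K`.
-/

section

variable {F L M : Type*} [Field F] [Field L] [Field M] [Algebra F L] [Algebra L M]
  [Algebra F M] [IsScalarTower F L M]

theorem map_minpoly_of_algebraicClosure_eq_bot (h : algebraicClosure F L = ⊥) {a : M}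
    (ha : IsIntegral F a) : (minpoly F a).map (algebraMap F L) = minpoly L a := by
  refine minpoly.map_algebraMap ha ((Polynomial.lifts_iff_coeff_lifts _).2 fun i => ?_)
  have hi : IsIntegral F ((minpoly L a).coeff i) :=
    Polynomial.isIntegral_coeff_of_dvd _ _ (minpoly.monic ha) (minpoly.monic ha.tower_top)
      (minpoly.dvd_map_of_isScalarTower F L a) i
  exact mem_bot.1 (h ▸ mem_algebraicClosure_iff'.2 hi)

theorem linearDisjoint_adjoin_simple_of_algebraicClosure_eq_bot (h : algebraicClosure F L = ⊥)
    {a : M} (ha : IsIntegral F a) : F⟮a⟯.LinearDisjoint L := by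
  refine .of_basis_left (adjoin.powerBasis ha).basis ?_
  have hdeg : (minpoly L a).natDegree = (adjoin.powerBasis ha).dim := by
    rw [← map_minpoly_of_algebraicClosure_eq_bot h ha, Polynomial.natDegree_map,
      adjoin.powerBasis_dim]
  convert (linearIndependent_pow (K := L) a).comp _ (finCongr hdeg.symm).injective using 1
  ext i
  simp [adjoin.powerBasis_gen]

theorem linearDisjoint_of_algebraicClosure_eq_bot (h : algebraicClosure F L = ⊥)
    (A : IntermediateField F M) [Algebra.IsSeparable F A] : A.LinearDisjoint L := by
  have : Algebra.IsIntegral F A.toSubalgebra := inferInstanceAs (Algebra.IsIntegral F A)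
  refine Subalgebra.LinearDisjoint.of_linearDisjoint_finite_left _ _ fun A' hA' _ => ?_
  let B : IntermediateField F M := A'.toIntermediateField'
    (isField_of_isIntegral_of_isField' (Field.toIsField F))
  have : FiniteDimensional F B := ‹Module.Finite F A'›
  have : Algebra.IsSeparable F B := Algebra.IsSeparable.of_algHom F A (inclusion (E := B) hA')
  obtain ⟨a, ha⟩ := Field.exists_primitive_element F B
  have hB : F⟮(a : M)⟯ = B := by rw [← lift_adjoin_simple, ha, lift_top]
  have := linearDisjoint_adjoin_simple_of_algebraicClosure_eq_bot (L := L) h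
    (a := (a : M)) ((Algebra.IsIntegral.isIntegral a).map B.val)
  rwa [hB] at this

theorem exists_algHom_subalgebra_sup {R S T : Type*} [CommRing R] [CommRing S] [CommRing T]
    [Algebra R S] [Algebra R T] {A B : Subalgebra R S} (H : A.LinearDisjoint B)
    (f : A →ₐ[R] T) (g : B →ₐ[R] T) :
    ∃ φ : ↥(A ⊔ B) →ₐ[R] T, φ.comp (Subalgebra.inclusion le_sup_left) = f ∧
      φ.comp (Subalgebra.inclusion le_sup_right) = g := by
  refine ⟨(Algebra.TensorProduct.productMap f g).comp (H.mulMap.symm : _ →ₐ[R] _), ?_, ?_⟩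
  · ext a
    have : H.mulMap.symm (Subalgebra.inclusion le_sup_left a) = a ⊗ₜ 1 :=
      H.mulMap.symm_apply_eq.2 (Subtype.ext (by simp))
    simp [this]
  · ext b
    have : H.mulMap.symm (Subalgebra.inclusion le_sup_right b) = 1 ⊗ₜ b :=
      H.mulMap.symm_apply_eq.2 (Subtype.ext (by simp))
    simp [this]

theorem exists_algHom_sup_fieldRange {A : IntermediateField F M} [Algebra.IsAlgebraic F A]
    (H : A.LinearDisjoint L) {R : Type*} [CommRing R] [Algebra F R]
    (f : A →ₐ[F] R) (g : L →ₐ[F] R) :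
    ∃ φ : ↥(A ⊔ (IsScalarTower.toAlgHom F L M).fieldRange) →ₐ[F] R,
      (∀ a : A, φ (inclusion le_sup_left a) = f a) ∧
      ∀ y : L, φ (inclusion le_sup_right ⟨algebraMap L M y, y, rfl⟩) = g y := by
  let e := AlgEquiv.ofInjectiveField (IsScalarTower.toAlgHom F L M)
  obtain ⟨φ, hf, hg⟩ := exists_algHom_subalgebra_sup H f (g.comp e.symm)
  refine ⟨φ.comp (Subalgebra.equivOfEq _ _ (sup_toSubalgebra_of_isAlgebraic_left A _)).toAlgHom,
    fun a => DFunLike.congr_fun hf a, fun y => ?_⟩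
  exact (DFunLike.congr_fun hg (e y)).trans (congrArg g (e.symm_apply_apply y))

theorem exists_algHom_algebraicClosure_sup_fieldRange [PerfectField F]
    (g : L →ₐ[algebraicClosure F L] M) :
    ∃ φ : ↥(algebraicClosure F M ⊔ (IsScalarTower.toAlgHom F L M).fieldRange) →ₐ[F] M,
      (∀ a : algebraicClosure F M, φ (inclusion le_sup_left a) = a) ∧
      ∀ y : L, φ (inclusion le_sup_right ⟨algebraMap L M y, y, rfl⟩) = g y := by
  let κ := algebraicClosure F L
  have : IsScalarTower F κ M := .of_algebraMap_eq fun x => IsScalarTower.algebraMap_apply F L M x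
  have : PerfectField κ := Algebra.IsAlgebraic.perfectField F
  obtain ⟨φ, hφA, hφL⟩ := exists_algHom_sup_fieldRange
    (linearDisjoint_of_algebraicClosure_eq_bot (algebraicClosure.algebraicClosure_eq_bot F L)
      (algebraicClosure κ M)) (algebraicClosure κ M).val g
  have hconst : ∀ a ∈ algebraicClosure F M, a ∈ algebraicClosure κ M := fun a ha =>
    mem_algebraicClosure_iff.2 ((mem_algebraicClosure_iff.1 ha).tower_top κ)
  have hle : algebraicClosure F M ⊔ (IsScalarTower.toAlgHom F L M).fieldRange ≤
      (algebraicClosure κ M ⊔ (IsScalarTower.toAlgHom κ L M).fieldRange).restrictScalars F :=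
    sup_le (fun a ha => (le_sup_left : algebraicClosure κ M ≤ _) (hconst a ha))
      fun a ha => (le_sup_right : (IsScalarTower.toAlgHom κ L M).fieldRange ≤ _) ha
  exact ⟨(φ.restrictScalars F).comp (inclusion hle),
    fun a => hφA ⟨a, hconst a a.2⟩, hφL⟩

theorem algHom_apply_eq_self_of_mem_sup {A B N : IntermediateField F M} (h : A ⊔ B ≤ N)
    (φ : N →ₐ[F] M) (hA : ∀ x : N, (x : M) ∈ A → φ x = x) (hB : ∀ x : N, (x : M) ∈ B → φ x = x)
    (x : N) (hx : (x : M) ∈ A ⊔ B) : φ x = x := by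
  have hsup : A ⊔ B = adjoin F (A ∪ B : Set M) := by rw [adjoin_union, adjoin_self, adjoin_self]
  have hφ : φ.comp (inclusion h) = (A ⊔ B).val := by
    refine algHom_ext_of_eq_adjoin F hsup ?_
    rintro y (hy | hy)
    · exact hA ⟨y, _⟩ hy
    · exact hB ⟨y, _⟩ hy
  exact DFunLike.congr_fun hφ ⟨x, hx⟩

theorem exists_algHom_extendScalars_sup [PerfectField F] (g : L →ₐ[algebraicClosure F L] M)
    {D : IntermediateField F M} (hD : D ≤ (IsScalarTower.toAlgHom F L M).fieldRange)
    (hg : ∀ y : L, algebraMap L M y ∈ D → g y = algebraMap L M y) :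
    ∃ φ : extendScalars (sup_le_sup_left hD (algebraicClosure F M)) →ₐ[
        ↥(algebraicClosure F M ⊔ D)] M,
      ∀ (y : L) (hy), φ ⟨algebraMap L M y, hy⟩ = g y := by
  obtain ⟨φ, hφA, hφL⟩ := exists_algHom_algebraicClosure_sup_fieldRange g
  have hφD : ∀ x : ↥(algebraicClosure F M ⊔ (IsScalarTower.toAlgHom F L M).fieldRange),
      (x : M) ∈ D → φ x = x := by
    rintro ⟨x, _⟩ hx
    obtain ⟨y, rfl⟩ := hD hx
    exact (hφL y).trans (hg y hx)
  have hcomm := algHom_apply_eq_self_of_mem_sup (sup_le_sup_left hD _) φ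
    (fun x hx => hφA ⟨x, hx⟩) hφD
  exact ⟨{ φ.toRingHom with commutes' := fun x => hcomm ⟨x, _⟩ x.2 }, fun y _ => hφL y⟩

theorem extendScalars_eq_adjoin_of_eq_sup {A B N : IntermediateField F M} (hA : A ≤ N)
    (hN : N = A ⊔ B) : extendScalars hA = adjoin A (B : Set M) := by
  refine restrictScalars_injective F ?_
  rw [extendScalars_restrictScalars, restrictScalars_adjoin_eq_sup, adjoin_self, hN]

end

section

variable (K E L M : Type*) [Field K] [Field E] [Field L] [Field M] [Algebra K E] [Algebra K L]
  [Algebra K M] [Algebra E M] [Algebra L M] [IsScalarTower K E M] [IsScalarTower K L M]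

theorem splits_minpoly_adjoin_range [Normal K E] (y : E) :
    ((minpoly L (algebraMap E M y)).map
      (algebraMap L (adjoin L (Set.range (algebraMap E M))))).Splits := by
  let N := adjoin L (Set.range (algebraMap E M))
  let ι : E →+* N := (algebraMap E M).codRestrict N fun y => subset_adjoin L _ ⟨y, rfl⟩
  have hι : ι.comp (algebraMap K E) = (algebraMap L N).comp (algebraMap K L) := by
    ext k
    exact (IsScalarTower.algebraMap_apply K E M k).symm.trans
      (IsScalarTower.algebraMap_apply K L M k)
  have hsplits : (((minpoly K y).map (algebraMap K L)).map (algebraMap L N)).Splits := by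
    rw [Polynomial.map_map, ← hι, ← Polynomial.map_map]
    exact (Normal.splits ‹_› y).map ι
  refine hsplits.of_dvd
    (Polynomial.map_ne_zero (Polynomial.map_ne_zero (minpoly.ne_zero (Normal.isIntegral ‹_› y)))) ?_
  rw [← minpoly.algebraMap_eq (algebraMap E M).injective y]
  exact Polynomial.map_dvd _ (minpoly.dvd_map_of_isScalarTower K L _)

theorem normal_adjoin_range [Normal K E] :
    Normal L (adjoin L (Set.range (algebraMap E M))) := by
  let N := adjoin L (Set.range (algebraMap E M))
  have hint : ∀ y : E, IsIntegral L (algebraMap E M y) := fun y =>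
    ((Normal.isIntegral (F := K) ‹_› y).algebraMap).tower_top
  have : Algebra.IsAlgebraic L N :=
    isAlgebraic_adjoin (Set.forall_mem_range.2 hint)
  refine normal_iff.2 fun x => ⟨Algebra.IsIntegral.isIntegral x, ?_⟩
  rw [← minpoly.algebraMap_eq (algebraMap N M).injective x]
  refine splits_of_mem_adjoin L M ?_ x.2
  rintro _ ⟨y, rfl⟩
  exact ⟨hint y, splits_minpoly_adjoin_range K E L M y⟩

theorem isSeparable_adjoin_range [Algebra.IsSeparable K E] :
    Algebra.IsSeparable L (adjoin L (Set.range (algebraMap E M))) := by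
  rw [isSeparable_adjoin_iff_isSeparable]
  rintro _ ⟨y, rfl⟩
  exact ((Algebra.IsSeparable.isSeparable K y).map (IsScalarTower.toAlgHom K E M)
    (algebraMap E M).injective).tower_top L

theorem isGalois_adjoin_range [IsGalois K E] :
    IsGalois L (adjoin L (Set.range (algebraMap E M))) where
  to_isSeparable := isSeparable_adjoin_range K E L M
  to_normal := normal_adjoin_range K E L M

end

theorem isGalois_extendScalars_of_eq_sup_fieldRange {F K E M : Type*} [Field F] [Field K]
    [Field E] [Field M] [Algebra F E] [Algebra F M] [Algebra K E] [Algebra K M] [Algebra E M]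
    [IsScalarTower F E M] [IsScalarTower K E M] [IsGalois K E] {A N : IntermediateField F M}
    (hK : ∀ k : K, algebraMap K M k ∈ A) (hA : A ≤ N)
    (hN : N = A ⊔ (IsScalarTower.toAlgHom F E M).fieldRange) :
    IsGalois A (extendScalars hA) := by
  let : Algebra K A := ((algebraMap K M).codRestrict A hK).toAlgebra
  have : IsScalarTower K A M := .of_algebraMap_eq fun _ => rfl
  rw [extendScalars_eq_adjoin_of_eq_sup hA hN]
  exact isGalois_adjoin_range K E A M

section

variable (K E Et)

theorem QE_eq_QK_sup_Eimg : QE E Et = QK K Et ⊔ Eimg E Et := by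
  rw [QE, QK, sup_assoc, sup_eq_right.2 (Kimg_le_Eimg K E Et)]

theorem isGalois_QEext [IsGalois K E] : IsGalois (QK K Et) (QEext K E Et) :=
  isGalois_extendScalars_of_eq_sup_fieldRange
    (fun k => (le_sup_right : Kimg K Et ≤ QK K Et) ⟨k, rfl⟩) _ (QE_eq_QK_sup_Eimg K E Et)

theorem isGalois_Eext [IsGalois K E] : IsGalois (kEK K E Et) (Eext K E Et) :=
  isGalois_extendScalars_of_eq_sup_fieldRange
    (fun k => (le_sup_right : Kimg K Et ≤ kEK K E Et) ⟨k, rfl⟩) _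
    (sup_eq_right.2 (kEK_le_Eimg K E Et)).symm

theorem QEext_eq_adjoin : QEext K E Et = adjoin (QK K Et) (Eimg E Et : Set Et) :=
  extendScalars_eq_adjoin_of_eq_sup _ (QE_eq_QK_sup_Eimg K E Et)

end

theorem restrictAut6_injective [IsGalois K E] :
    Function.Injective (restrictAut6 : (QEext K E Et ≃ₐ[QK K Et] QEext K E Et) → _) := by
  intro σ τ h
  have hστ : (QEext K E Et).val.comp (σ : _ →ₐ[QK K Et] QEext K E Et) =
      (QEext K E Et).val.comp (τ : _ →ₐ[QK K Et] QEext K E Et) :=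
    algHom_ext_of_eq_adjoin _ (QEext_eq_adjoin K E Et) fun x hx => by
      exact congrArg (Subtype.val : Eext K E Et → Et) (DFunLike.congr_fun h ⟨x, hx⟩)
  ext x
  exact DFunLike.congr_fun hστ x

theorem exists_algHom_QEext_extends (τ : Eext K E Et →ₐ[kEK K E Et] Et) :
    ∃ φ : QEext K E Et →ₐ[QK K Et] Et, ∀ x : Eext K E Et, φ ⟨x, Eimg_le_QE E Et x.2⟩ = τ x := by
  let g : E →ₐ[algebraicClosure ℚ E] Et :=
    { (τ : Eext K E Et →+* Et).comp (IsScalarTower.toAlgHom ℚ E Et).rangeRestrict.toRingHom with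
      commutes' := fun c =>
        τ.commutes ⟨algebraMap E Et c, (le_sup_left : _ ≤ kEK K E Et) ⟨c, c.2, rfl⟩⟩ }
  have hg : ∀ y : E, algebraMap E Et y ∈ Kimg K Et → g y = algebraMap E Et y := fun y hy =>
    τ.commutes ⟨algebraMap E Et y, (le_sup_right : Kimg K Et ≤ kEK K E Et) hy⟩
  obtain ⟨φ, hφ⟩ := exists_algHom_extendScalars_sup g (Kimg_le_Eimg K E Et) hg
  refine ⟨φ, ?_⟩
  rintro ⟨_, y, rfl⟩
  exact hφ y _

theorem restrictAut6_surjective [IsGalois K E] :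
    Function.Surjective (restrictAut6 : (QEext K E Et ≃ₐ[QK K Et] QEext K E Et) → _) := by
  intro τ
  have : IsGalois (QK K Et) (QEext K E Et) := isGalois_QEext K E Et
  obtain ⟨φ, hφ⟩ := exists_algHom_QEext_extends ((Eext K E Et).val.comp (τ : _ →ₐ[_] _))
  refine ⟨AlgHom.restrictNormal' φ (QEext K E Et), ?_⟩
  ext x
  exact (φ.restrictNormal_commutes (QEext K E Et) ⟨x, Eimg_le_QE E Et x.2⟩).trans (hφ x)

theorem stmt6_general
    (K E Et : Type*) [Field K] [Field E] [Field Et]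
    [Algebra ℚ K] [Algebra ℚ E] [Algebra ℚ Et]
    [Algebra K E] [Algebra E Et] [Algebra K Et]
    [IsScalarTower ℚ K E] [IsScalarTower ℚ E Et] [IsScalarTower K E Et]
    [IsScalarTower ℚ K Et] [IsGalois K E] :
    IsGalois (QK K Et) (QEext K E Et) ∧
    IsGalois (kEK K E Et) (Eext K E Et) ∧
    (∀ (σ : QEext K E Et ≃ₐ[QK K Et] QEext K E Et) (x : QEext K E Et),
      (x : Et) ∈ Eimg E Et → ((σ x : QEext K E Et) : Et) ∈ Eimg E Et) ∧
    Function.Bijective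
      (fun σ : QEext K E Et ≃ₐ[QK K Et] QEext K E Et => restrictAut6 σ) :=
  ⟨isGalois_QEext K E Et, isGalois_Eext K E Et, fun σ _ hx => restrict6_mem σ hx,
    restrictAut6_injective, restrictAut6_surjective⟩

/-- Let `K` be a finitely generated extension of `ℚ`, `E/K` an algebraic
Galois extension and `Ẽ` an algebraic closure of `E`. Let `Q̃` be the algebraic closure of
`ℚ` in `Ẽ` and `κ_E` the constant field of `E`. Then `Q̃·E/Q̃·K` is Galois, `E/κ_E·K` is
Galois, every automorphism of `Q̃·E` over `Q̃·K` maps `E` into itself, and the restriction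
homomorphism `Gal(Q̃·E/Q̃·K) → Gal(E/κ_E·K)`, `σ ↦ σ|_E`, is bijective. -/
theorem stmt6
    (K E Et : Type*) [Field K] [Field E] [Field Et]
    [Algebra ℚ K] [Algebra ℚ E] [Algebra ℚ Et]
    [Algebra K E] [Algebra E Et] [Algebra K Et]
    [IsScalarTower ℚ K E] [IsScalarTower ℚ E Et] [IsScalarTower K E Et]
    [IsScalarTower ℚ K Et]
    [Algebra.IsAlgebraic K E] [IsGalois K E] [IsAlgClosure E Et]
    (hKfg : ∃ s : Finset K, IntermediateField.adjoin ℚ (s : Set K) = ⊤) :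
    IsGalois (QK K Et) (QEext K E Et) ∧
    IsGalois (kEK K E Et) (Eext K E Et) ∧
    (∀ (σ : QEext K E Et ≃ₐ[QK K Et] QEext K E Et) (x : QEext K E Et),
      (x : Et) ∈ Eimg E Et → ((σ x : QEext K E Et) : Et) ∈ Eimg E Et) ∧
    Function.Bijective
      (fun σ : QEext K E Et ≃ₐ[QK K Et] QEext K E Et => restrictAut6 σ) :=
  stmt6_general K E Et

end
end

section
/- Let ℓ be a prime number and n ≥ 1 an integer. Let r : GL_n(ℤ_ℓ) → GL_n(𝔽_ℓ) be the group homomorphism induced by the reduction ring homomorphism ℤ_ℓ → 𝔽_ℓ from the ring of ℓ-adic integers to the field with ℓ elements. Then the kernel of r is a pro-ℓ group: every open subgroup of ker(r) (with the topology induced from GL_n(ℤ_ℓ)) has index a power of ℓ. -/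
open Matrix

/-!
Write `Γ(I)` for the group of invertible matrices congruent to `1` modulo an ideal `I`, and let `p`
be a prime lying in `I`. If `A ≡ 1` modulo both `I` and `J`, then in
`A ^ p - 1 = (A - 1) * (1 + A + ⋯ + A ^ (p - 1))` the first factor vanishes modulo `J`, and the
second is congruent to `p`, hence to `0`, modulo `I`; so `A ^ p ≡ 1` modulo `J * I`. By iteration,
`g ^ p ^ m ∈ Γ(I ^ m)` for all `g ∈ Γ(I)`, that is, `Γ(I) / Γ(I ^ m)` is a `p`-group. For the
`I`-adic topology every open subgroup of `Γ(I)` contains some `Γ(I ^ m)`, which has finite index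
when the ring is finite modulo `I ^ m`.
-/

open Filter Topology

theorem exists_index_eq_prime_pow_of_forall_pow_mem {G : Type*} [Group G] {p : ℕ} [Fact p.Prime]
    {N H : Subgroup G} [N.Normal] [H.FiniteIndex] (hNH : N ≤ H)
    (hN : ∀ g : G, ∃ k : ℕ, g ^ p ^ k ∈ N) : ∃ k : ℕ, H.index = p ^ k := by
  have quotient_isPGroup : IsPGroup p (G ⧸ N) := by
    rintro ⟨g⟩
    exact (hN g).imp fun k hk ↦ (QuotientGroup.eq_one_iff (g ^ p ^ k)).mpr hk
  have index_map : (H.map (QuotientGroup.mk' N)).index = H.index :=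
    H.index_map_eq (QuotientGroup.mk'_surjective N) (by rwa [QuotientGroup.ker_mk'])
  have : (H.map (QuotientGroup.mk' N)).FiniteIndex :=
    ⟨index_map ▸ Subgroup.FiniteIndex.index_ne_zero⟩
  exact index_map ▸ quotient_isPGroup.index _

section MatrixCongruence

variable {n R : Type*} [Fintype n] [DecidableEq n] [CommRing R] {I J : Ideal R}

theorem mul_mem_matrix_mul {A B : Matrix n n R} (hA : A ∈ I.matrix n) (hB : B ∈ J.matrix n) :
    A * B ∈ (I * J).matrix n := fun i j ↦
  sum_mem fun k _ ↦ Ideal.mul_mem_mul (hA i k) (hB k j)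

theorem natCast_mem_matrix {a : ℕ} (ha : (a : R) ∈ I) : (a : Matrix n n R) ∈ I.matrix n := by
  rw [Ideal.mem_matrix]
  intro i j
  rw [Matrix.natCast_apply, Nat.cast_ite, Nat.cast_zero]
  split_ifs
  exacts [ha, I.zero_mem]

theorem pow_sub_one_mem_matrix {A : Matrix n n R} (hA : A - 1 ∈ I.matrix n) (k : ℕ) :
    A ^ k - 1 ∈ I.matrix n := by
  rw [← geom_sum_mul]
  exact (I.matrix n).mul_mem_left _ hA

theorem geom_sum_mem_matrix {a : ℕ} (ha : (a : R) ∈ I) {A : Matrix n n R}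
    (hA : A - 1 ∈ I.matrix n) : ∑ i ∈ Finset.range a, A ^ i ∈ I.matrix n := by
  have sum_eq : ∑ i ∈ Finset.range a, A ^ i = ∑ i ∈ Finset.range a, (A ^ i - 1) + a := by simp
  rw [sum_eq]
  exact add_mem (sum_mem fun i _ ↦ pow_sub_one_mem_matrix hA i) (natCast_mem_matrix ha)

theorem pow_sub_one_mem_matrix_mul {a : ℕ} (ha : (a : R) ∈ I) {A : Matrix n n R}
    (hAI : A - 1 ∈ I.matrix n) (hAJ : A - 1 ∈ J.matrix n) : A ^ a - 1 ∈ (J * I).matrix n := by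
  rw [← mul_geom_sum]
  exact mul_mem_matrix_mul hAJ (geom_sum_mem_matrix ha hAI)

theorem pow_pow_sub_one_mem_matrix_pow {a : ℕ} (ha : (a : R) ∈ I) {A : Matrix n n R}
    (hA : A - 1 ∈ I.matrix n) (k : ℕ) : A ^ a ^ k - 1 ∈ (I ^ (k + 1)).matrix n := by
  induction k with
  | zero => simpa only [pow_zero, pow_one, zero_add] using hA
  | succ k ih =>
    rw [pow_succ a, pow_mul, pow_succ I]
    exact pow_sub_one_mem_matrix_mul ha (pow_sub_one_mem_matrix hA _) ih

end MatrixCongruence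

section CongruenceSubgroup

variable {n R S : Type*} [Fintype n] [DecidableEq n] [CommRing R] [CommRing S]

theorem mem_ker_map_iff {f : R →+* S} {g : GL n R} :
    g ∈ (GeneralLinearGroup.map f).ker ↔ (g : Matrix n n R) - 1 ∈ (RingHom.ker f).matrix n := by
  simp only [MonoidHom.mem_ker, GeneralLinearGroup.ext_iff, GeneralLinearGroup.map_apply,
    Ideal.mem_matrix, RingHom.mem_ker, Matrix.sub_apply, map_sub, sub_eq_zero, Matrix.one_apply,
    apply_ite f, map_one, map_zero, GeneralLinearGroup.coe_one]

variable (n) in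
/-- The principal congruence subgroup `Γ(I)` of `GL n R`: the matrices congruent to `1` modulo `I`,
defined as the kernel of reduction modulo `I`. -/
def congruenceSubgroup (I : Ideal R) : Subgroup (GL n R) :=
  (GeneralLinearGroup.map (Ideal.Quotient.mk I)).ker

theorem mem_congruenceSubgroup {I : Ideal R} {g : GL n R} :
    g ∈ congruenceSubgroup n I ↔ (g : Matrix n n R) - 1 ∈ I.matrix n := by
  rw [congruenceSubgroup, mem_ker_map_iff, Ideal.mk_ker]

instance congruenceSubgroup_normal (I : Ideal R) : (congruenceSubgroup n I).Normal :=
  MonoidHom.normal_ker _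

instance congruenceSubgroup_finiteIndex (I : Ideal R) [Finite (R ⧸ I)] :
    (congruenceSubgroup n I).FiniteIndex :=
  Subgroup.finiteIndex_ker _

theorem congruenceSubgroup_mono : Monotone (congruenceSubgroup n (R := R)) := fun _ _ hIJ _ hg ↦
  mem_congruenceSubgroup.mpr (Ideal.matrix_monotone n hIJ (mem_congruenceSubgroup.mp hg))

theorem pow_pow_mem_congruenceSubgroup_pow {f : R →+* S} {p : ℕ} [CharP S p] {g : GL n R}
    (hg : g ∈ (GeneralLinearGroup.map f).ker) (m : ℕ) :
    g ^ p ^ m ∈ congruenceSubgroup n (RingHom.ker f ^ m) := by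
  have natCast_mem_ker : (p : R) ∈ RingHom.ker f := by
    rw [RingHom.mem_ker, map_natCast, CharP.cast_eq_zero]
  refine congruenceSubgroup_mono (Ideal.pow_le_pow_right m.le_succ) ?_
  rw [mem_congruenceSubgroup, Units.val_pow_eq_pow_val]
  exact pow_pow_sub_one_mem_matrix_pow natCast_mem_ker (mem_ker_map_iff.mp hg) m

end CongruenceSubgroup

section AdicTopology

theorem units_nhds_eq {M : Type*} [Monoid M] [TopologicalSpace M] (u : Mˣ) :
    𝓝 u = comap Units.val (𝓝 u.val) ⊓ comap (fun v : Mˣ ↦ (v⁻¹).val) (𝓝 (u⁻¹).val) := by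
  rw [← nhds_induced, ← nhds_induced, ← nhds_inf, ← Units.topology_eq_inf]

variable {n R : Type*} [Fintype n] [DecidableEq n] [CommRing R] [TopologicalSpace R] {I : Ideal R}

theorem isTopologicalRing_of_isAdic (hI : IsAdic I) : IsTopologicalRing R := by
  rw [hI]
  exact I.nonarchimedean.toIsTopologicalRing

theorem hasBasis_nhds_zero_matrix_of_isAdic (hI : IsAdic I) :
    (𝓝 (0 : Matrix n n R)).HasBasis (fun _ ↦ True) fun m ↦
      ((I ^ m).matrix n : Set (Matrix n n R)) := by
  have nhds_zero_eq :
      𝓝 (0 : Matrix n n R) = Filter.pi fun _ : n ↦ Filter.pi fun _ : n ↦ 𝓝 (0 : R) :=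
    nhds_pi.trans (congrArg Filter.pi (funext fun _ ↦ nhds_pi))
  rw [nhds_zero_eq]
  refine hI.hasBasis_nhds_zero.pi_self.pi_self.to_hasBasis ?_ ?_
  · rintro ⟨_, _, m⟩ -
    exact ⟨m, trivial, fun A hA i _ j _ ↦ hA i j⟩
  · intro m _
    exact ⟨⟨Set.univ, Set.univ, m⟩, ⟨Set.finite_univ, Set.finite_univ, trivial⟩,
      fun A hA i j ↦ hA i trivial j trivial⟩

theorem hasBasis_nhds_one_matrix_of_isAdic (hI : IsAdic I) :
    (𝓝 (1 : Matrix n n R)).HasBasis (fun _ ↦ True) fun m ↦ {A | A - 1 ∈ (I ^ m).matrix n} := by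
  have := isTopologicalRing_of_isAdic hI
  rw [← nhds_translation_sub]
  exact (hasBasis_nhds_zero_matrix_of_isAdic hI).comap _

theorem hasBasis_nhds_one_congruenceSubgroup_of_isAdic (hI : IsAdic I) :
    (𝓝 (1 : GL n R)).HasBasis (fun _ ↦ True) fun m ↦
      (congruenceSubgroup n (I ^ m) : Set (GL n R)) := by
  have basis_one := hasBasis_nhds_one_matrix_of_isAdic (n := n) hI
  rw [units_nhds_eq, inv_one, Units.val_one]
  refine ((basis_one.comap _).inf (basis_one.comap _)).to_hasBasis ?_ ?_
  · rintro ⟨k, l⟩ -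
    have mono {m : ℕ} (hm : m ≤ max k l) :=
      congruenceSubgroup_mono (n := n) (Ideal.pow_le_pow_right (I := I) hm)
    exact ⟨max k l, trivial, fun g hg ↦
      ⟨mem_congruenceSubgroup.mp (mono (le_max_left k l) hg),
        mem_congruenceSubgroup.mp (inv_mem (mono (le_max_right k l) hg))⟩⟩
  · intro m _
    exact ⟨⟨m, m⟩, ⟨trivial, trivial⟩, fun g hg ↦ mem_congruenceSubgroup.mpr hg.1⟩

end AdicTopology

theorem isAdic_maximalIdeal_padicInt (p : ℕ) [Fact p.Prime] :
    IsAdic (IsLocalRing.maximalIdeal ℤ_[p]) := by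
  refine isAdic_iff.mpr ⟨IsLocalRing.isOpen_maximalIdeal_pow _, fun s hs ↦ ?_⟩
  obtain ⟨ε, ε_pos, ball_subset⟩ := Metric.mem_nhds_iff.mp hs
  obtain ⟨m, hm⟩ := PadicInt.exists_pow_neg_lt p ε_pos
  refine ⟨m, fun x hx ↦ ball_subset ?_⟩
  rw [PadicInt.maximalIdeal_eq_span_p, Ideal.span_singleton_pow, SetLike.mem_coe,
    ← PadicInt.norm_le_pow_iff_mem_span_pow] at hx
  exact mem_ball_zero_iff.mpr (hx.trans_lt hm)

theorem stmt7_general {n R S : Type*} [Fintype n] [DecidableEq n] [CommRing R] [TopologicalSpace R]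
    [CommRing S] [Finite S] {p : ℕ} [Fact p.Prime] [CharP S p] (f : R →+* S)
    (hf : IsAdic (RingHom.ker f)) (hfg : (RingHom.ker f).FG)
    (H : Subgroup (GeneralLinearGroup.map (n := n) f).ker)
    (hH : IsOpen (H : Set (GeneralLinearGroup.map (n := n) f).ker)) :
    ∃ k : ℕ, H.index = p ^ k := by
  obtain ⟨U, hU, hUH⟩ := mem_nhds_subtype _ _ _ |>.mp (hH.mem_nhds H.one_mem)
  obtain ⟨m, -, hm⟩ := (hasBasis_nhds_one_congruenceSubgroup_of_isAdic hf).mem_iff.mp hU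
  have congruenceSubgroup_le :
      (congruenceSubgroup n (RingHom.ker f ^ m)).subgroupOf (GeneralLinearGroup.map f).ker ≤ H :=
    fun g hg ↦ hUH (hm hg)
  have : Finite (R ⧸ RingHom.ker f) := Finite.of_injective _ f.kerLift_injective
  have : Finite (R ⧸ RingHom.ker f ^ m) := Ideal.finite_quotient_pow hfg m
  have : H.FiniteIndex := Subgroup.finiteIndex_of_le congruenceSubgroup_le
  exact exists_index_eq_prime_pow_of_forall_pow_mem congruenceSubgroup_le fun g ↦
    ⟨m, pow_pow_mem_congruenceSubgroup_pow g.2 m⟩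

/-- The kernel of the reduction map `GL_n(ℤ_ℓ) → GL_n(𝔽_ℓ)` is a pro-ℓ group:
every open subgroup of the kernel has index a power of `ℓ`. -/
theorem stmt7
    (ℓ : ℕ) [Fact ℓ.Prime] (n : ℕ) (hn : 1 ≤ n)
    (r : GL (Fin n) ℤ_[ℓ] →* GL (Fin n) (ZMod ℓ))
    (hr : r = Matrix.GeneralLinearGroup.map (PadicInt.toZMod (p := ℓ)))
    (H : Subgroup r.ker) (hH : IsOpen (H : Set r.ker)) :
    ∃ k : ℕ, H.index = ℓ ^ k := by
  subst hr
  have isAdic_ker : IsAdic (RingHom.ker (PadicInt.toZMod (p := ℓ))) :=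
    PadicInt.ker_toZMod (p := ℓ) ▸ isAdic_maximalIdeal_padicInt ℓ
  exact stmt7_general PadicInt.toZMod isAdic_ker (IsNoetherian.noetherian _) H hH
end

section
/- Let ℓ be a prime number and n ≥ 1 an integer. Let G be a profinite group which is isomorphic, as a topological group, to a quotient A/B, where A is a closed subgroup of GL_n(ℤ_ℓ) and B is a closed normal subgroup of A. Let G⁺ be the topological closure of the subgroup of G generated by all pro-ℓ closed subgroups of G. Then: G⁺ is a normal subgroup of G; the quotient group G/G⁺ is finite; the order of G/G⁺ is not divisible by ℓ; and G/G⁺ is isomorphic to a subquotient of GL_n(𝔽_ℓ), i.e. there exist a subgroup H of GL_n(𝔽_ℓ) and a normal subgroup N of H such that G/G⁺ is isomorphic to H/N. -/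
open Matrix

/-- A closed subgroup `H` of a topological group is pro-`ℓ` if every open subgroup of `H`
(with the subspace topology) has index a power of `ℓ`. -/
def IsProL (ℓ : ℕ) {G : Type*} [Group G] [TopologicalSpace G] (H : Subgroup G) : Prop :=
  ∀ U : Subgroup H, IsOpen (U : Set H) → ∃ k : ℕ, U.index = ℓ ^ k

/-- `Q` is a subquotient of `T` if there are a subgroup `H` of `T` and a normal subgroup
`N` of `H` such that `Q` is isomorphic to `H/N`. -/
def Group.IsSubquotientOf (Q T : Type*) [Group Q] [Group T] : Prop :=
  ∃ (H : Subgroup T) (N : Subgroup H) (hN : N.Normal),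
    haveI := hN; Nonempty (Q ≃* (H ⧸ N))

open Filter Topology

/-!
Call `x` a pro-`ℓ` element if `x ^ ℓ ^ k → 1`. The closed subgroup topologically generated by such
an `x` is pro-`ℓ`, so `G⁺` contains every pro-`ℓ` element of `G`. If `a ∈ GL_n(ℤ_ℓ)` is congruent to
`1` mod `ℓ`, then `a ^ ℓ ^ k` is congruent to `1` mod `ℓ ^ (k + 1)`; hence the image in `G` of the
kernel of the reduction `A → GL_n(𝔽_ℓ)` consists of pro-`ℓ` elements, and `G/G⁺` is a quotient of
the image of this reduction. If `g` had order `ℓ` in `G/G⁺`, write a power of `g` lying in the image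
of the kernel as `g ^ (ℓ ^ a * m)` with `ℓ ∤ m`: then `g ^ m` is a pro-`ℓ` element, so `g ^ m ∈ G⁺`
and `ℓ ∣ m`, a contradiction.
-/

section Index

variable {G H : Type*} [Group G] [Group H]

theorem index_dvd_of_pow_mem {U : Subgroup G} [U.Normal] {g : G} {n : ℕ}
    (hg : ∀ x, x ∈ Subgroup.zpowers g) (h : g ^ n ∈ U) : U.index ∣ n := by
  have generates : ∀ q : G ⧸ U, q ∈ Subgroup.zpowers (g : G ⧸ U) := by
    intro q
    obtain ⟨x, rfl⟩ := QuotientGroup.mk_surjective q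
    obtain ⟨j, rfl⟩ := hg x
    exact ⟨j, rfl⟩
  rw [Subgroup.index, ← orderOf_eq_card_of_forall_mem_zpowers generates, orderOf_dvd_iff_pow_eq_one,
    ← QuotientGroup.mk_pow, QuotientGroup.eq_one_iff]
  exact h

theorem index_comap_of_denseRange [TopologicalSpace G] [SeparatelyContinuousMul G] {f : H →* G}
    (hf : DenseRange f) {U : Subgroup G} (hU : IsOpen (U : Set G)) :
    (U.comap f).index = U.index := by
  let cosetMap : H ⧸ U.comap f → G ⧸ U :=
    Quotient.map' f fun x y h ↦ by
      simpa only [QuotientGroup.leftRel_apply, Subgroup.mem_comap, map_mul, map_inv] using h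
  refine Nat.card_congr (Equiv.ofBijective cosetMap ⟨?_, ?_⟩)
  · rintro ⟨x⟩ ⟨y⟩ h
    refine QuotientGroup.eq.mpr ?_
    simpa only [Subgroup.mem_comap, map_mul, map_inv] using QuotientGroup.eq.mp h
  · rintro ⟨g⟩
    obtain ⟨h, hh⟩ : ∃ h, f h ∈ (g⁻¹ * ·) ⁻¹' (U : Set G) :=
      hf.exists_mem_open (hU.preimage (continuous_const_mul g⁻¹)) ⟨g, by simp⟩
    exact ⟨h, (QuotientGroup.eq.mpr hh).symm⟩

end Index

section IsProL

variable {ℓ : ℕ} {G H : Type*} [Group G] [TopologicalSpace G] [Group H] [TopologicalSpace H]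

theorem IsProL.map {P : Subgroup G} (hP : IsProL ℓ P) {f : G →* H} (hf : Continuous f) :
    IsProL ℓ (P.map f) := by
  intro U hU
  have continuous_restrict : Continuous (f.subgroupMap P) :=
    (hf.comp continuous_subtype_val).subtype_mk _
  obtain ⟨k, hk⟩ := hP (U.comap (f.subgroupMap P)) (hU.preimage continuous_restrict)
  exact ⟨k, by rw [← hk, U.index_comap_of_surjective (f.subgroupMap_surjective P)]⟩

theorem IsProL.topologicalClosure [IsTopologicalGroup G] {P : Subgroup G} (hP : IsProL ℓ P) :
    IsProL ℓ P.topologicalClosure := by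
  intro U hU
  let incl : P →* P.topologicalClosure := Subgroup.inclusion P.le_topologicalClosure
  have dense : DenseRange incl := (denseRange_inclusion_iff P.le_topologicalClosure).mpr subset_rfl
  obtain ⟨k, hk⟩ := hP (U.comap incl) (hU.preimage (continuous_inclusion P.le_topologicalClosure))
  exact ⟨k, by rw [← hk, index_comap_of_denseRange dense hU]⟩

theorem isClosed_map_conj [SeparatelyContinuousMul G] {P : Subgroup G} (hP : IsClosed (P : Set G))
    (g : G) : IsClosed (P.map (MulAut.conj g).toMonoidHom : Set G) :=
  ((Homeomorph.mulLeft g).trans (Homeomorph.mulRight g⁻¹)).isClosedMap _ hP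

end IsProL

/-- An element `x` of a topological group is pro-`ℓ` if `x ^ ℓ ^ k` tends to `1`; this is the
topological analogue of having `ℓ`-power order. -/
def IsProLElement (ℓ : ℕ) {G : Type*} [Group G] [TopologicalSpace G] (x : G) : Prop :=
  Tendsto (fun k : ℕ ↦ x ^ ℓ ^ k) atTop (𝓝 1)

namespace IsProLElement

variable {ℓ : ℕ} {G H : Type*} [Group G] [TopologicalSpace G] [Group H] [TopologicalSpace H]

theorem map {x : G} (hx : IsProLElement ℓ x) {f : G →* H} (hf : Continuous f) :
    IsProLElement ℓ (f x) := by
  simpa only [IsProLElement, Function.comp_def, map_pow, map_one] using (hf.tendsto 1).comp hx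

theorem of_coe {P : Subgroup G} {x : P} (hx : IsProLElement ℓ (x : G)) : IsProLElement ℓ x :=
  IsInducing.subtypeVal.tendsto_nhds_iff.mpr hx

theorem of_pow {x : G} {a : ℕ} (hx : IsProLElement ℓ (x ^ ℓ ^ a)) : IsProLElement ℓ x := by
  refine (tendsto_add_atTop_iff_nat a).mp (hx.congr fun k ↦ ?_)
  rw [← pow_mul, ← pow_add, add_comm]

theorem exists_pow_mem {x : G} (hx : IsProLElement ℓ x) {U : Subgroup G}
    (hU : IsOpen (U : Set G)) : ∃ k : ℕ, x ^ ℓ ^ k ∈ U :=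
  (hx.eventually_mem (hU.mem_nhds U.one_mem)).exists

theorem isProL_zpowers [Fact ℓ.Prime] {x : G} (hx : IsProLElement ℓ x) :
    IsProL ℓ (Subgroup.zpowers x) := by
  intro U hU
  let generator : Subgroup.zpowers x := ⟨x, Subgroup.mem_zpowers x⟩
  have generates : ∀ y, y ∈ Subgroup.zpowers generator := by
    rintro ⟨_, j, rfl⟩
    exact ⟨j, rfl⟩
  obtain ⟨k, hk⟩ := exists_pow_mem (of_coe (x := generator) hx) hU
  obtain ⟨m, -, hm⟩ := (Nat.dvd_prime_pow Fact.out).mp (index_dvd_of_pow_mem generates hk)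
  exact ⟨m, hm⟩

end IsProLElement

theorem normal_biSup_of_map_conj_mem {G : Type*} [Group G] {S : Set (Subgroup G)}
    (hS : ∀ P ∈ S, ∀ g : G, P.map (MulAut.conj g).toMonoidHom ∈ S) : (⨆ P ∈ S, P).Normal := by
  refine ⟨fun x hx g ↦ ?_⟩
  have le_comap : ⨆ P ∈ S, P ≤ (⨆ P ∈ S, P).comap (MulAut.conj g).toMonoidHom :=
    iSup₂_le fun P hP ↦ Subgroup.map_le_iff_le_comap.mp (le_biSup id (hS P hP g))
  exact le_comap hx

/-- The closed pro-`ℓ` subgroups of `G`, which topologically generate `G⁺`. -/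
def closedProLSubgroups (ℓ : ℕ) (G : Type*) [Group G] [TopologicalSpace G] : Set (Subgroup G) :=
  {H | IsClosed (H : Set G) ∧ IsProL ℓ H}

/-- The subgroup `G⁺`: the closure of the subgroup generated by all closed pro-`ℓ` subgroups. -/
def proLGeneratedSubgroup (ℓ : ℕ) (G : Type*) [Group G] [TopologicalSpace G]
    [IsTopologicalGroup G] : Subgroup G :=
  (⨆ H ∈ closedProLSubgroups ℓ G, H).topologicalClosure

section ProLGeneratedSubgroup

variable {ℓ : ℕ} {G : Type*} [Group G] [TopologicalSpace G] [IsTopologicalGroup G]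

theorem map_conj_mem_closedProLSubgroups {P : Subgroup G} (hP : P ∈ closedProLSubgroups ℓ G)
    (g : G) : P.map (MulAut.conj g).toMonoidHom ∈ closedProLSubgroups ℓ G :=
  ⟨isClosed_map_conj hP.1 g, hP.2.map (IsTopologicalGroup.continuous_conj g)⟩

instance proLGeneratedSubgroup.instNormal : (proLGeneratedSubgroup ℓ G).Normal :=
  haveI : (⨆ H ∈ closedProLSubgroups ℓ G, H).Normal :=
    normal_biSup_of_map_conj_mem fun _ ↦ map_conj_mem_closedProLSubgroups
  Subgroup.is_normal_topologicalClosure _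

theorem le_proLGeneratedSubgroup {P : Subgroup G} (hP : P ∈ closedProLSubgroups ℓ G) :
    P ≤ proLGeneratedSubgroup ℓ G :=
  (le_biSup id hP).trans (Subgroup.le_topologicalClosure _)

variable [Fact ℓ.Prime]

theorem IsProLElement.mem_proLGeneratedSubgroup {x : G} (hx : IsProLElement ℓ x) :
    x ∈ proLGeneratedSubgroup ℓ G :=
  le_proLGeneratedSubgroup
    ⟨Subgroup.isClosed_topologicalClosure _, hx.isProL_zpowers.topologicalClosure⟩
    (Subgroup.le_topologicalClosure _ (Subgroup.mem_zpowers x))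

variable {K : Subgroup G} [K.FiniteIndex]

theorem finiteIndex_proLGeneratedSubgroup (hK : ∀ x ∈ K, IsProLElement ℓ x) :
    (proLGeneratedSubgroup ℓ G).FiniteIndex :=
  Subgroup.finiteIndex_of_le fun x hx ↦ (hK x hx).mem_proLGeneratedSubgroup

theorem not_dvd_index_proLGeneratedSubgroup (hK : ∀ x ∈ K, IsProLElement ℓ x) :
    ¬ ℓ ∣ (proLGeneratedSubgroup ℓ G).index := by
  intro hdvd
  have := finiteIndex_proLGeneratedSubgroup hK
  obtain ⟨q, hq⟩ := exists_prime_orderOf_dvd_card' (G := G ⧸ proLGeneratedSubgroup ℓ G) ℓ hdvd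
  obtain ⟨g, rfl⟩ := QuotientGroup.mk_surjective q
  obtain ⟨N, hN_pos, -, hgN⟩ :=
    Subgroup.exists_pow_mem_of_index_ne_zero (Subgroup.FiniteIndex.index_ne_zero (H := K)) g
  obtain ⟨a, m, hm, rfl⟩ :=
    Nat.exists_eq_pow_mul_and_not_dvd hN_pos.ne' ℓ (Fact.out : ℓ.Prime).ne_one
  have hgm : IsProLElement ℓ (g ^ m) := by
    refine .of_pow (a := a) (hK _ ?_)
    rwa [← pow_mul, mul_comm m]
  have hgm_mem := hgm.mem_proLGeneratedSubgroup
  rw [← QuotientGroup.eq_one_iff, QuotientGroup.mk_pow, ← orderOf_dvd_iff_pow_eq_one, hq] at hgm_mem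
  exact hm hgm_mem

end ProLGeneratedSubgroup

theorem isSubquotientOf_of_ker_le_ker {A Q T : Type*} [Group A] [Group Q] [Group T] {r : A →* T}
    {φ : A →* Q} (hφ : Function.Surjective φ) (hker : r.ker ≤ φ.ker) :
    Group.IsSubquotientOf Q T := by
  let ψ : r.range →* Q :=
    (QuotientGroup.lift r.ker φ hker).comp (QuotientGroup.quotientKerEquivRange r).symm.toMonoidHom
  have hψ : Function.Surjective ψ :=
    (QuotientGroup.lift_surjective_of_surjective _ _ hφ hker).comp
      (QuotientGroup.quotientKerEquivRange r).symm.surjective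
  exact ⟨r.range, ψ.ker, inferInstance, ⟨(QuotientGroup.quotientKerEquivOfSurjective ψ hψ).symm⟩⟩

section Congruence

theorem pow_dvd_pow_sub_one {R : Type*} [Ring R] {p : ℕ} {a : R} (h : (p : R) ∣ a - 1) (k : ℕ) :
    ((p ^ (k + 1) : ℕ) : R) ∣ a ^ p ^ k - 1 := by
  obtain ⟨y, hy⟩ := h
  -- `R` need not be commutative, so compute in `ℤ[X]` and specialize `X` to `y`.
  have dvd_polynomial : (p : Polynomial ℤ) ^ (k + 1) ∣
      (1 + (p : Polynomial ℤ) * Polynomial.X) ^ p ^ k - 1 ^ p ^ k :=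
    dvd_sub_pow_of_dvd_sub ⟨Polynomial.X, add_sub_cancel_left _ _⟩ k
  have ha : a = 1 + p * y := by rw [← hy, add_sub_cancel]
  simpa [ha] using map_dvd (Polynomial.aeval y) dvd_polynomial

variable {ι R : Type*} [Fintype ι] [DecidableEq ι]

theorem matrix_natCast_dvd_iff [Semiring R] {c : ℕ} {M : Matrix ι ι R} :
    (c : Matrix ι ι R) ∣ M ↔ ∀ i j, (c : R) ∣ M i j := by
  have natCast_mul_apply (N : Matrix ι ι R) (i j : ι) :
      ((c : Matrix ι ι R) * N) i j = c * N i j := by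
    rw [← nsmul_eq_mul, Matrix.smul_apply, nsmul_eq_mul]
  constructor
  · rintro ⟨N, rfl⟩ i j
    exact ⟨N i j, natCast_mul_apply N i j⟩
  · intro h
    choose N hN using h
    exact ⟨.of N, Matrix.ext fun i j ↦ (hN i j).trans (natCast_mul_apply _ i j).symm⟩

variable {ℓ : ℕ} [Fact ℓ.Prime]

theorem padicInt_toZMod_eq_zero_iff_dvd {x : ℤ_[ℓ]} : PadicInt.toZMod x = 0 ↔ (ℓ : ℤ_[ℓ]) ∣ x := by
  rw [← RingHom.mem_ker, PadicInt.ker_toZMod, PadicInt.maximalIdeal_eq_span_p,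
    Ideal.mem_span_singleton]

theorem padicInt_tendsto_zero_of_pow_dvd {u : ℕ → ℤ_[ℓ]} (hu : ∀ k, (ℓ : ℤ_[ℓ]) ^ k ∣ u k) :
    Tendsto u atTop (𝓝 0) := by
  have norm_lt_one : ‖(ℓ : ℤ_[ℓ])‖ < 1 := (PadicInt.norm_lt_one_iff_dvd _).mpr dvd_rfl
  refine squeeze_zero_norm (fun k ↦ ?_)
    (tendsto_pow_atTop_nhds_zero_of_lt_one (norm_nonneg _) norm_lt_one)
  obtain ⟨y, hy⟩ := hu k
  rw [hy, norm_mul, norm_pow]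
  exact mul_le_of_le_one_right (by positivity) (PadicInt.norm_le_one y)

theorem mapMatrix_toZMod_eq_one_iff_dvd {a : Matrix ι ι ℤ_[ℓ]} :
    (PadicInt.toZMod (p := ℓ)).mapMatrix a = 1 ↔ (ℓ : Matrix ι ι ℤ_[ℓ]) ∣ a - 1 := by
  rw [← sub_eq_zero, ← map_one (PadicInt.toZMod (p := ℓ)).mapMatrix, ← map_sub,
    matrix_natCast_dvd_iff, ← Matrix.ext_iff]
  exact forall₂_congr fun i j ↦ padicInt_toZMod_eq_zero_iff_dvd

theorem tendsto_pow_of_mapMatrix_toZMod_eq_one {a : Matrix ι ι ℤ_[ℓ]}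
    (ha : (PadicInt.toZMod (p := ℓ)).mapMatrix a = 1) :
    Tendsto (fun k : ℕ ↦ a ^ ℓ ^ k) atTop (𝓝 1) := by
  refine tendsto_pi_nhds.mpr fun i ↦ tendsto_pi_nhds.mpr fun j ↦ tendsto_sub_nhds_zero_iff.mp
    (padicInt_tendsto_zero_of_pow_dvd fun k ↦ ?_)
  have pow_congr := pow_dvd_pow_sub_one (mapMatrix_toZMod_eq_one_iff_dvd.mp ha) k
  calc (ℓ : ℤ_[ℓ]) ^ k ∣ (ℓ : ℤ_[ℓ]) ^ (k + 1) := pow_dvd_pow _ k.le_succ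
    _ = ((ℓ ^ (k + 1) : ℕ) : ℤ_[ℓ]) := (Nat.cast_pow _ _).symm
    _ ∣ (a ^ ℓ ^ k - 1) i j := matrix_natCast_dvd_iff.mp pow_congr i j

theorem isProLElement_of_mem_ker_map_toZMod {a : GL ι ℤ_[ℓ]}
    (ha : a ∈ (GeneralLinearGroup.map (n := ι) (PadicInt.toZMod (p := ℓ))).ker) :
    IsProLElement ℓ a := by
  have tendsto_val {b : GL ι ℤ_[ℓ]}
      (hb : b ∈ (GeneralLinearGroup.map (n := ι) (PadicInt.toZMod (p := ℓ))).ker) :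
      Tendsto (fun k : ℕ ↦ (b : Matrix ι ι ℤ_[ℓ]) ^ ℓ ^ k) atTop (𝓝 1) :=
    tendsto_pow_of_mapMatrix_toZMod_eq_one (congrArg Units.val hb)
  exact Units.isInducing_embedProduct.tendsto_nhds_iff.mpr <|
    (tendsto_val ha).prodMk_nhds
      ((MulOpposite.continuous_op.tendsto _).comp (tendsto_val (inv_mem ha)))

end Congruence

theorem stmt8_general {ℓ : ℕ} [Fact ℓ.Prime] {ι : Type*} [Fintype ι] [DecidableEq ι]
    {G : Type*} [Group G] [TopologicalSpace G] [IsTopologicalGroup G]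
    {A : Subgroup (GL ι ℤ_[ℓ])} {f : A →* G} (hf : Continuous f) (hsurj : Function.Surjective f) :
    Finite (G ⧸ proLGeneratedSubgroup ℓ G) ∧ ¬ ℓ ∣ Nat.card (G ⧸ proLGeneratedSubgroup ℓ G) ∧
      Group.IsSubquotientOf (G ⧸ proLGeneratedSubgroup ℓ G) (GL ι (ZMod ℓ)) := by
  let r : A →* GL ι (ZMod ℓ) :=
    (GeneralLinearGroup.map (PadicInt.toZMod (p := ℓ))).comp A.subtype
  let K : Subgroup G := r.ker.map f
  have : K.FiniteIndex :=
    ⟨ne_zero_of_dvd_ne_zero (Subgroup.finiteIndex_ker r).index_ne_zero (r.ker.index_map_dvd hsurj)⟩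
  have hK : ∀ x ∈ K, IsProLElement ℓ x := by
    rintro _ ⟨a, ha, rfl⟩
    exact (IsProLElement.of_coe (isProLElement_of_mem_ker_map_toZMod ha)).map hf
  have := finiteIndex_proLGeneratedSubgroup hK
  refine ⟨inferInstance, not_dvd_index_proLGeneratedSubgroup hK, ?_⟩
  refine isSubquotientOf_of_ker_le_ker (r := r)
    (φ := (QuotientGroup.mk' (proLGeneratedSubgroup ℓ G)).comp f)
    ((QuotientGroup.mk'_surjective _).comp hsurj) fun a ha ↦ ?_
  exact (QuotientGroup.eq_one_iff _).mpr (hK _ ⟨a, ha, rfl⟩).mem_proLGeneratedSubgroup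

/-- Let `ℓ` be a prime, `n ≥ 1`, and let `G` be a profinite group isomorphic,
as a topological group, to a quotient `A/B` with `A` a closed subgroup of `GL_n(ℤ_ℓ)` and
`B` a closed normal subgroup of `A`. Let `G⁺` be the closure of the subgroup generated by
all pro-`ℓ` closed subgroups of `G`. Then `G⁺` is normal in `G`, the quotient `G/G⁺` is
finite of order prime to `ℓ`, and `G/G⁺` is isomorphic to a subquotient of `GL_n(𝔽_ℓ)`. -/
theorem stmt8
    (ℓ : ℕ) [Fact ℓ.Prime] (n : ℕ) (hn : 1 ≤ n)
    (G : Type*) [Group G] [TopologicalSpace G] [IsTopologicalGroup G]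
    [CompactSpace G] [T2Space G] [TotallyDisconnectedSpace G]
    (A : Subgroup (GL (Fin n) ℤ_[ℓ])) (hA : IsClosed (A : Set (GL (Fin n) ℤ_[ℓ])))
    (B : Subgroup A) [B.Normal] (hB : IsClosed (B : Set A))
    (e : G ≃* (A ⧸ B)) (he : Continuous e) (he' : Continuous e.symm)
    (Gplus : Subgroup G)
    (hGplus : Gplus =
      (⨆ H ∈ {H : Subgroup G | IsClosed (H : Set G) ∧ IsProL ℓ H}, H).topologicalClosure) :
    Gplus.Normal ∧ Finite (G ⧸ Gplus) ∧ ¬ ℓ ∣ Nat.card (G ⧸ Gplus) ∧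
      (∃ hnorm : Gplus.Normal, haveI := hnorm;
        Group.IsSubquotientOf (G ⧸ Gplus) (GL (Fin n) (ZMod ℓ))) := by
  obtain ⟨hfin, hcoprime, hsub⟩ := stmt8_general
    (f := e.symm.toMonoidHom.comp (QuotientGroup.mk' B))
    (he'.comp QuotientGroup.continuous_mk) (e.symm.surjective.comp (QuotientGroup.mk'_surjective B))
  subst hGplus
  exact ⟨proLGeneratedSubgroup.instNormal, hfin, hcoprime, proLGeneratedSubgroup.instNormal, hsub⟩
end

section
/- Let ℓ be a prime number and let G be a profinite group such that the topological closure of the subgroup generated by all pro-ℓ closed subgroups of G is all of G. Then every nontrivial finite continuous quotient of G has order divisible by ℓ; that is, for every open normal subgroup N of G with N ≠ G, the index [G:N] is divisible by ℓ. -/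
section

variable {G : Type*} [Group G] [TopologicalSpace G]

theorem IsProL.exists_relIndex_eq_pow {ℓ : ℕ} {H N : Subgroup G} (hH : IsProL ℓ H)
    (hN : IsOpen (N : Set G)) : ∃ k : ℕ, N.relIndex H = ℓ ^ k :=
  hH (N.subgroupOf H) (hN.preimage continuous_subtype_val)

theorem IsProL.dvd_relIndex_of_not_le {ℓ : ℕ} {H N : Subgroup G} (hH : IsProL ℓ H)
    (hN : IsOpen (N : Set G)) (hHN : ¬H ≤ N) : ℓ ∣ N.relIndex H := by
  obtain ⟨k, hk⟩ := hH.exists_relIndex_eq_pow hN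
  have hk0 : k ≠ 0 := by
    rintro rfl
    exact hHN (Subgroup.relIndex_eq_one.mp (hk.trans (pow_zero ℓ)))
  exact hk ▸ dvd_pow_self ℓ hk0

theorem exists_mem_not_le_of_topologicalClosure_sSup_eq_top [IsTopologicalGroup G]
    {S : Set (Subgroup G)} (hS : (sSup S).topologicalClosure = ⊤) {N : Subgroup G}
    (hN : IsOpen (N : Set G)) (hN_ne : N ≠ ⊤) : ∃ H ∈ S, ¬H ≤ N := by
  contrapose! hN_ne with hSN
  have hN_closed : IsClosed (N : Set G) := N.isClosed_of_isOpen hN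
  exact top_le_iff.mp (hS ▸ (sSup S).topologicalClosure_minimal (sSup_le hSN) hN_closed)

theorem stmt10_general [IsTopologicalGroup G] {ℓ : ℕ} {S : Set (Subgroup G)}
    (hS : ∀ H ∈ S, IsProL ℓ H) (hS_top : (sSup S).topologicalClosure = ⊤)
    (N : Subgroup G) [N.Normal] [N.FiniteIndex] (hN : IsOpen (N : Set G)) (hN_ne : N ≠ ⊤) :
    ℓ ∣ N.index := by
  obtain ⟨H, hHS, hHN⟩ := exists_mem_not_le_of_topologicalClosure_sSup_eq_top hS_top hN hN_ne
  exact ((hS H hHS).dvd_relIndex_of_not_le hN hHN).trans (N.relIndex_dvd_index_of_normal H)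

end

/-- Let `ℓ` be a prime and `G` a profinite group such that the topological
closure of the subgroup generated by all pro-`ℓ` closed subgroups of `G` is all of `G`.
Then every proper open normal subgroup of `G` has index divisible by `ℓ`. -/
theorem stmt10
    (ℓ : ℕ) (hℓ : ℓ.Prime)
    (G : Type*) [Group G] [TopologicalSpace G] [IsTopologicalGroup G]
    [CompactSpace G] [T2Space G] [TotallyDisconnectedSpace G]
    (hG : (⨆ H ∈ {H : Subgroup G | IsClosed (H : Set G) ∧ IsProL ℓ H}, H).topologicalClosure
      = ⊤)
    (N : Subgroup G) [N.Normal] (hNopen : IsOpen (N : Set G)) (hNne : N ≠ ⊤) :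
    ℓ ∣ N.index := by
  have : Finite (G ⧸ N) := N.quotient_finite_of_isOpen hNopen
  have : N.FiniteIndex := N.finiteIndex_of_finite_quotient
  rw [← sSup_eq_iSup] at hG
  exact stmt10_general (fun _ hH ↦ hH.2) hG N hNopen hNne
end

section
/- Let F be a finite field and let L/F be a (possibly infinite) Galois field extension such that the Galois group Gal(L/F) has finite exponent, i.e. there exists an integer n ≥ 1 with σⁿ = id for every σ ∈ Gal(L/F). Then L is a finite extension of F (L is finite-dimensional as an F-vector space). -/
/-!
The `q`-power Frobenius `φ` of `L`, with `q = |F|`, is an element of `Gal(L/F)`. If `φ ^ n = 1`,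
then every element of `L` is a root of the nonzero polynomial `X ^ (q ^ n) - X`, which has only
finitely many roots, so `L` itself is finite.
-/

open FiniteField Polynomial

theorem finite_of_forall_pow_eq_self {R : Type*} [CommRing R] [IsDomain R] {m : ℕ} (hm : 1 < m)
    (hpow : ∀ x : R, x ^ m = x) : Finite R := by
  have hne : (X ^ m - X : R[X]) ≠ 0 := (monic_X_pow_sub (by simpa using hm)).ne_zero
  have hroot (x : R) : (X ^ m - X : R[X]).IsRoot x := by simp [hpow x]
  exact Set.finite_univ_iff.mp ((finite_setOfPred_isRoot hne).subset fun x _ ↦ hroot x)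

theorem frobeniusAlgHom_pow_apply (F : Type*) {R : Type*} [Field F] [Fintype F] [CommRing R]
    [Algebra F R] (n : ℕ) (x : R) :
    (frobeniusAlgHom F R ^ n) x = x ^ Fintype.card F ^ n := by
  rw [AlgHom.coe_pow, coe_frobeniusAlgHom, pow_iterate]

theorem isOfFinOrder_frobeniusAlgHom_of_algEquiv {F L : Type*} [Field F] [Fintype F] [Field L]
    [Algebra F L] [Algebra.IsAlgebraic F L]
    (h : IsOfFinOrder (frobeniusAlgEquivOfAlgebraic F L)) :
    IsOfFinOrder (frobeniusAlgHom F L) :=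
  (Algebra.IsAlgebraic.algEquivEquivAlgHom F L).toMonoidHom.isOfFinOrder h

theorem stmt11_general (F R : Type*) [Field F] [Fintype F] [CommRing R] [IsDomain R] [Algebra F R]
    (h : IsOfFinOrder (frobeniusAlgHom F R)) : Module.Finite F R := by
  obtain ⟨n, hn, hfrob⟩ := h.exists_pow_eq_one
  have hpow (x : R) : x ^ Fintype.card F ^ n = x := by
    rw [← frobeniusAlgHom_pow_apply, hfrob, AlgHom.one_apply]
  have : Finite R :=
    finite_of_forall_pow_eq_self (Nat.one_lt_pow hn.ne' Fintype.one_lt_card) hpow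
  exact Module.Finite.of_finite

/-- Let `F` be a finite field and `L/F` a (possibly infinite) Galois field
extension whose Galois group has finite exponent. Then `L/F` is a finite extension. -/
theorem stmt11
    (F L : Type*) [Field F] [Finite F] [Field L] [Algebra F L] [IsGalois F L]
    (h : ∃ n : ℕ, 1 ≤ n ∧ ∀ σ : L ≃ₐ[F] L, σ ^ n = 1) :
    FiniteDimensional F L := by
  obtain ⟨n, hn, hexp⟩ := h
  have := Fintype.ofFinite F
  exact stmt11_general F L <|
    isOfFinOrder_frobeniusAlgHom_of_algEquiv <|
      isOfFinOrder_iff_pow_eq_one.mpr ⟨n, hn, hexp _⟩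
end

section
/- Let K be a field, Ω/K a field extension, and d ≥ 1 an integer. Let (K_i)_{i∈I} be a family of intermediate fields of Ω/K such that for every i ∈ I the extension K_i/K is Galois of finite degree [K_i:K] ≤ d. Let E be the compositum of the fields K_i inside Ω, and let N be the least common multiple of the integers 1, 2, …, d. Then every field automorphism σ of E fixing K pointwise satisfies σ^N = id; in particular, the automorphism group Aut(E/K) has finite exponent. -/
/-!
An automorphism over `K` permutes the roots of a minimal polynomial, so an element of degree at
most `d` has an orbit of some length `m` with `1 ≤ m ≤ d`, and `m` divides `lcm(1, …, d)`. Hence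
`σ ^ lcm(1, …, d)` fixes every element of every `Kᵢ`, and these elements generate the compositum.
-/

open Function Set Polynomial IntermediateField

section Periodic

variable {α : Type*} {f : α → α} {s : Set α} {x : α} {d : ℕ}

theorem minimalPeriod_mem_Icc_ncard (hs : s.Finite) (hmaps : MapsTo f s s) (hinj : InjOn f s)
    (hx : x ∈ s) : minimalPeriod f x ∈ Finset.Icc 1 s.ncard := by
  have := hs.fintype
  have hsemi : Semiconj Subtype.val (hmaps.restrict f s s) f := fun _ ↦ rfl
  have hperiod : minimalPeriod f x = minimalPeriod (hmaps.restrict f s s) ⟨x, hx⟩ :=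
    minimalPeriod_eq_minimalPeriod_iff.2 fun n ↦
      ⟨fun h ↦ Subtype.ext (((hsemi.iterate_right n) _).trans h), fun h ↦ h.map hsemi⟩
  rw [hperiod, Finset.mem_Icc, ← Nat.card_coe_set_eq, Nat.card_eq_fintype_card]
  exact ⟨minimalPeriod_pos_of_mem_periodicPts
    ((hmaps.restrict_inj.2 hinj).mem_periodicPts _), minimalPeriod_le_card⟩

theorem isPeriodicPt_lcm_Icc (hs : s.Finite) (hmaps : MapsTo f s s) (hinj : InjOn f s)
    (hx : x ∈ s) (hd : s.ncard ≤ d) : IsPeriodicPt f ((Finset.Icc 1 d).lcm id) x :=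
  isPeriodicPt_iff_minimalPeriod_dvd.2 <| Finset.dvd_lcm (f := id) <|
    Finset.Icc_subset_Icc_right hd (minimalPeriod_mem_Icc_ncard hs hmaps hinj hx)

end Periodic

theorem isPeriodicPt_lcm_Icc_of_mem_rootSet {R A : Type*} [CommRing R] [CommRing A] [IsDomain A]
    [Algebra R A] {p : R[X]} {x : A} {d : ℕ} {σ : A →ₐ[R] A} (hσ : Injective σ)
    (hx : x ∈ p.rootSet A) (hd : p.natDegree ≤ d) :
    IsPeriodicPt σ ((Finset.Icc 1 d).lcm id) x :=
  isPeriodicPt_lcm_Icc (p.rootSet_finite A) (rootSet_maps_to' id σ) hσ.injOn hx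
    ((p.ncard_rootSet_le A).trans hd)

section Field

variable {K Ω : Type*} [Field K] [Field Ω] [Algebra K Ω] {d : ℕ}

theorem algHom_pow_lcm_Icc_apply {x : Ω} (hx : IsIntegral K x) (hd : (minpoly K x).natDegree ≤ d)
    (σ : Ω →ₐ[K] Ω) : (σ ^ (Finset.Icc 1 d).lcm id) x = x := by
  have hroot : x ∈ (minpoly K x).rootSet Ω :=
    mem_rootSet.2 ⟨minpoly.ne_zero hx, minpoly.aeval K x⟩
  rw [AlgHom.coe_pow]
  exact isPeriodicPt_lcm_Icc_of_mem_rootSet σ.injective hroot hd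

theorem algHom_pow_lcm_Icc_eq_one_of_eq_adjoin {E : IntermediateField K Ω} {S : Set Ω}
    (hE : E = adjoin K S) (hS : ∀ x ∈ S, IsIntegral K x ∧ (minpoly K x).natDegree ≤ d)
    (σ : E →ₐ[K] E) :
    σ ^ (Finset.Icc 1 d).lcm id = 1 := by
  refine algHom_ext_of_eq_adjoin K hE fun x hx ↦ ?_
  let y : E := ⟨x, hE.ge (subset_adjoin K S hx)⟩
  obtain ⟨hint, hdeg⟩ : IsIntegral K (y : Ω) ∧ (minpoly K (y : Ω)).natDegree ≤ d := hS x hx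
  exact algHom_pow_lcm_Icc_apply (isIntegral_iff.2 hint) (minpoly_eq y ▸ hdeg) σ

end Field

theorem stmt12_general (K Ω : Type*) [Field K] [Field Ω] [Algebra K Ω] (d : ℕ)
    (ι : Type*) (Ki : ι → IntermediateField K Ω)
    (hfin : ∀ i, FiniteDimensional K (Ki i))
    (hdeg : ∀ i, Module.finrank K (Ki i) ≤ d)
    (E : IntermediateField K Ω) (hE : E = ⨆ i, Ki i) (σ : E →ₐ[K] E) :
    σ ^ (Finset.Icc 1 d).lcm id = 1 := by
  refine algHom_pow_lcm_Icc_eq_one_of_eq_adjoin (hE.trans (iSup_eq_adjoin K Ki)) (fun x hx ↦ ?_) σ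
  obtain ⟨i, hxi⟩ := mem_iUnion.1 hx
  let y : Ki i := ⟨x, hxi⟩
  exact ⟨isIntegral_iff.1 (IsIntegral.of_finite K y),
    minpoly_eq y ▸ (minpoly.natDegree_le y).trans (hdeg i)⟩

/-- Let `Ω/K` be a field extension and `d ≥ 1`. Let `(Kᵢ)_{i ∈ ι}` be a family
of intermediate fields of `Ω/K`, each Galois of finite degree `≤ d` over `K`, and let `E` be
their compositum. Let `N = lcm(1, …, d)`. Then every automorphism of `E` over `K` satisfies
`σ ^ N = 1`; in particular `Aut(E/K)` has finite exponent. -/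
theorem stmt12
    (K Ω : Type*) [Field K] [Field Ω] [Algebra K Ω]
    (d : ℕ) (hd : 1 ≤ d)
    (ι : Type*) (Ki : ι → IntermediateField K Ω)
    (hGal : ∀ i, IsGalois K (Ki i))
    (hfin : ∀ i, FiniteDimensional K (Ki i))
    (hdeg : ∀ i, Module.finrank K (Ki i) ≤ d)
    (E : IntermediateField K Ω) (hE : E = ⨆ i, Ki i)
    (N : ℕ) (hN : N = (Finset.Icc 1 d).lcm id) :
    ∀ σ : E ≃ₐ[K] E, σ ^ N = 1 := by
  refine fun σ ↦ AlgEquiv.ext fun x ↦ ?_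
  simpa [hN] using DFunLike.congr_fun (stmt12_general K Ω d ι Ki hfin hdeg E hE σ) x
end
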